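/- Let p, q, s be distinct primes with p ≡ 5 (mod 8), q ≡ 3 (mod 8), s ≡ 3 (mod 4), (p/q) = (p/s) = 1. Then the 2-Sylow subgroup of the ideal class group of ℚ(√p, √q, √s, √2) is cyclic. -/

import Mathlib

open NumberField

/-- The multiquadratic field `ℚ(√p, √q, √s, √2)`, realized inside `ℂ`. -/
noncomputable def quadquad (p q s : ℕ) : IntermediateField ℚ ℂ :=
  IntermediateField.adjoin ℚ
    {((Real.sqrt p : ℝ) : ℂ), ((Real.sqrt q : ℝ) : ℂ), ((Real.sqrt s : ℝ) : ℂ),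
     ((Real.sqrt 2 : ℝ) : ℂ)}

/-!
Let `K = F(√d)` be a quadratic extension of totally real number fields with `#Cl(F)` odd, ramified
only at `t` primes. Counting `2`-virtual units (elements generating the square of an ideal) modulo
squares gives `2 · [U_F : H] · #Cl(K)[2] ≤ 2 ^ t`, where `H` consists of the units of `F` that are,
up to squares, norms of `2`-virtual units of `K`. A unit in `H` is a square modulo every prime at
which `d` has odd valuation, so non-square residues of units bound `[U_F : H]` from below; these
residues are computed from the action of Frobenius on square roots of integers.

Along `ℚ ⊂ ℚ(√s) ⊂ ℚ(√2, √s) ⊂ F = ℚ(√2, √s, √p)` the bound forces odd class numbers. For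
`K = F(√q)` one has `t ≤ 4`. The fundamental unit `u = 1 + √2` is a non-square modulo the primes
above `q`. As every unit of `ℚ(√2)` is, up to squares, the norm of a `2`-virtual unit of
`ℚ(√2, √p)`, there are a unit `η` of `F` and an automorphism `τ` with `η · τ η = u w²`, so neither
`η` nor `u η` lies in `H` either. Hence `[U_F : H] ≥ 4`, so `#Cl(K)[2] ≤ 2`.
-/

namespace TwoClassGroup

open IsDedekindDomain
open scoped nonZeroDivisors Pointwise

section SquaresInAbelianGroups

variable {A B : Type*} [CommGroup A] [CommGroup B]

theorem map_square_eq_square_range (f : A →* B) :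
    (Subgroup.square A).map f = f.range.map (powMonoidHom 2) := by
  ext b
  simp only [Subgroup.mem_map, Subgroup.mem_square, isSquare_iff_exists_sq,
    MonoidHom.mem_range, powMonoidHom_apply]
  constructor
  · rintro ⟨_, ⟨a, rfl⟩, rfl⟩
    exact ⟨f a, ⟨a, rfl⟩, (map_pow f a 2).symm⟩
  · rintro ⟨_, ⟨a, rfl⟩, rfl⟩
    exact ⟨a ^ 2, ⟨a, rfl⟩, map_pow f a 2⟩

/- Squaring identifies the classes of order at most two with the elements of `f(A) ∩ B²` modulo
`f(A)²`; pull both back to `A`. -/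
theorem card_ker_sq_quotient_range (f : A →* B)
    (hB : Function.Injective (powMonoidHom 2 : B →* B)) :
    Nat.card (powMonoidHom 2 : B ⧸ f.range →* B ⧸ f.range).ker =
      (Subgroup.square A ⊔ f.ker).relIndex ((Subgroup.square B).comap f) := by
  set q := QuotientGroup.mk' f.range
  set D : Subgroup B := f.range.comap (powMonoidHom 2)
  have hker : (powMonoidHom 2 : B ⧸ f.range →* B ⧸ f.range).ker = D.map q := by
    refine (Subgroup.map_comap_eq_self_of_surjective (QuotientGroup.mk'_surjective _) _).symm.trans
      (congrArg (Subgroup.map q) ?_)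
    ext b
    simp [D, MonoidHom.mem_ker, ← QuotientGroup.mk_pow, QuotientGroup.eq_one_iff]
  have hD : D.map (powMonoidHom 2) = ((Subgroup.square B).comap f).map f := by
    rw [Subgroup.map_comap_eq, Subgroup.map_comap_eq, inf_comm]
    congr 1
    ext b
    simp [isSquare_iff_exists_sq, eq_comm]
  have hsup : (Subgroup.square B).comap f ⊔ f.ker = (Subgroup.square B).comap f :=
    sup_eq_left.2 (Subgroup.ker_le_comap f _)
  calc Nat.card (powMonoidHom 2 : B ⧸ f.range →* B ⧸ f.range).ker
      = f.range.relIndex D := by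
        rw [hker, ← Subgroup.relIndex_bot_left, ← Subgroup.relIndex_comap,
          MonoidHom.comap_bot, QuotientGroup.ker_mk']
    _ = (f.range.map (powMonoidHom 2)).relIndex (D.map (powMonoidHom 2)) :=
        (Subgroup.relIndex_map_map_of_injective _ _ hB).symm
    _ = ((Subgroup.square A).map f).relIndex (((Subgroup.square B).comap f).map f) := by
        rw [hD, map_square_eq_square_range]
    _ = _ := by rw [Subgroup.relIndex_map_map, hsup]

end SquaresInAbelianGroups

section CyclicityCriterion

theorem card_ker_comp_le {A B C : Type*} [Group A] [Group B] [Group C] [Finite B]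
    (g : B →* C) (f : A →* B) :
    Nat.card (g.comp f).ker ≤ Nat.card f.ker * Nat.card g.ker := by
  have hindex : f.ker.relIndex (g.comp f).ker ≤ Nat.card g.ker := by
    rw [Subgroup.relIndex_ker]
    refine Nat.card_mono (Set.toFinite _) ?_
    rintro _ ⟨a, ha, rfl⟩
    exact ha
  have hle : f.ker ≤ (g.comp f).ker := fun a ha => by simp_all [MonoidHom.mem_ker]
  calc Nat.card (g.comp f).ker
      = Nat.card f.ker * f.ker.relIndex (g.comp f).ker := by
        rw [← Subgroup.relIndex_bot_left, ← Subgroup.relIndex_bot_left,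
          Subgroup.relIndex_mul_relIndex _ _ _ bot_le hle]
    _ ≤ _ := Nat.mul_le_mul_left _ hindex

theorem card_ker_powMonoidHom_pow_le {G : Type*} [CommGroup G] [Finite G] {p : ℕ}
    (h : Nat.card (powMonoidHom p : G →* G).ker ≤ p) (k : ℕ) :
    Nat.card (powMonoidHom (p ^ k) : G →* G).ker ≤ p ^ k := by
  induction k with
  | zero => simp
  | succ k ih =>
    have hcomp : (powMonoidHom (p ^ (k + 1)) : G →* G) =
        (powMonoidHom p).comp (powMonoidHom (p ^ k)) := by
      ext x
      simp [pow_succ, pow_mul]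
    rw [hcomp, pow_succ]
    exact (card_ker_comp_le _ _).trans (Nat.mul_le_mul ih h)

theorem isCyclic_of_card_ker_powMonoidHom_le {G : Type*} [CommGroup G] [Finite G] {p : ℕ}
    [Fact p.Prime] (hG : IsPGroup p G) (h : Nat.card (powMonoidHom p : G →* G).ker ≤ p) :
    IsCyclic G := by
  classical
  have := Fintype.ofFinite G
  obtain ⟨N, hN⟩ := IsPGroup.iff_card.1 hG
  refine isCyclic_of_card_pow_eq_one_le fun n hn => ?_
  obtain ⟨k, -, hk⟩ := (Nat.dvd_prime_pow Fact.out).1 (hN ▸ Nat.gcd_dvd_right n (Nat.card G))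
  have hpow (x : G) (hx : x ^ n = 1) : x ^ p ^ k = 1 := by
    rw [← hk, pow_gcd_eq_one]
    exact ⟨hx, hN ▸ pow_card_eq_one'⟩
  have hle : p ^ k ≤ n := hk ▸ Nat.gcd_le_left _ hn
  refine le_trans ?_ ((card_ker_powMonoidHom_pow_le h k).trans hle)
  rw [← Fintype.card_subtype, ← Nat.card_eq_fintype_card]
  exact Nat.card_mono (Set.toFinite _) hpow

theorem sylow_isCyclic_of_card_ker_powMonoidHom_le {G : Type*} [CommGroup G] [Finite G] {p : ℕ}
    [Fact p.Prime] (h : Nat.card (powMonoidHom p : G →* G).ker ≤ p) (P : Sylow p G) :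
    IsCyclic (P : Subgroup G) := by
  refine isCyclic_of_card_ker_powMonoidHom_le P.isPGroup' (le_trans ?_ h)
  refine Nat.card_le_card_of_injective (fun x => ⟨x.1, ?_⟩) fun x y hxy => ?_
  · exact congrArg Subtype.val x.2
  · exact Subtype.ext (Subtype.ext (Subtype.mk.inj hxy))

end CyclicityCriterion

section SelmerGroup

variable {R K : Type*} [CommRing R] [IsDedekindDomain R] [Field K] [Algebra R K]
  [IsFractionRing R K]

/-- The elements of `Kˣ` whose valuation at `v` is even. -/
noncomputable def evenAt (K : Type*) [Field K] [Algebra R K] [IsFractionRing R K]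
    (v : HeightOneSpectrum R) : Subgroup Kˣ :=
  (Subgroup.square (Multiplicative ℤ)).comap (v.valuationOfNeZero (K := K))

/-- The elements of `Kˣ` whose valuation is even outside `T`: the preimage in `Kˣ` of the `2`-Selmer
group `K(T, 2) ≤ Kˣ/(Kˣ)²`. -/
noncomputable def twoSelmer (K : Type*) [Field K] [Algebra R K] [IsFractionRing R K]
    (T : Set (HeightOneSpectrum R)) : Subgroup Kˣ :=
  ⨅ v : {v // v ∉ T}, evenAt K v.1

theorem mem_evenAt {v : HeightOneSpectrum R} {x : Kˣ} :
    x ∈ evenAt K v ↔ IsSquare (v.valuation K (x : K)) := by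
  rw [evenAt, Subgroup.mem_comap, Subgroup.mem_square, ← HeightOneSpectrum.valuationOfNeZero_eq]
  refine ⟨fun h => h.map WithZero.coeMonoidHom, ?_⟩
  rintro ⟨m, hm⟩
  obtain ⟨n, rfl⟩ := WithZero.ne_zero_iff_exists.1 (show m ≠ 0 by rintro rfl; simp at hm)
  exact ⟨n, WithZero.coe_injective (by rw [hm, WithZero.coe_mul])⟩

theorem mem_twoSelmer {T : Set (HeightOneSpectrum R)} {x : Kˣ} :
    x ∈ twoSelmer K T ↔ ∀ v ∉ T, IsSquare (v.valuation K (x : K)) := by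
  simp [twoSelmer, Subgroup.mem_iInf, mem_evenAt]

theorem square_le_twoSelmer (T : Set (HeightOneSpectrum R)) :
    Subgroup.square Kˣ ≤ twoSelmer K T :=
  le_iInf fun v _ hx => hx.map (v.1.valuationOfNeZero (K := K))

theorem index_square_multiplicative_int_dvd_two :
    (Subgroup.square (Multiplicative ℤ)).index ∣ 2 :=
  Subgroup.index_dvd_two_iff.2 ⟨.ofAdd 1, fun b => by
    change Even (Multiplicative.toAdd b + 1) ∨ Even (Multiplicative.toAdd b)
    rw [Int.even_add_one]
    exact (em _).symm⟩

theorem relIndex_evenAt_dvd_two (v : HeightOneSpectrum R) (H : Subgroup Kˣ) :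
    (evenAt K v).relIndex H ∣ 2 := by
  rw [evenAt, Subgroup.relIndex_comap]
  exact (Subgroup.relIndex_dvd_index_of_normal _ _).trans index_square_multiplicative_int_dvd_two

theorem twoSelmer_empty_eq_inf (T : Set (HeightOneSpectrum R)) :
    twoSelmer K (∅ : Set (HeightOneSpectrum R)) = (⨅ v : T, evenAt K v.1) ⊓ twoSelmer K T := by
  ext x
  simp only [Subgroup.mem_inf, mem_twoSelmer, Subgroup.mem_iInf, mem_evenAt, Subtype.forall,
    Set.mem_empty_iff_false, not_false_eq_true, true_imp_iff, ← forall_and]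
  exact forall_congr' fun v => by by_cases hv : v ∈ T <;> simp [hv]

theorem relIndex_twoSelmer_ne_zero_and_le {T : Set (HeightOneSpectrum R)} (hT : T.Finite) :
    (twoSelmer K (∅ : Set (HeightOneSpectrum R))).relIndex (twoSelmer K T) ≠ 0 ∧
      (twoSelmer K (∅ : Set (HeightOneSpectrum R))).relIndex (twoSelmer K T) ≤ 2 ^ T.ncard := by
  have := hT.fintype
  rw [twoSelmer_empty_eq_inf T, Subgroup.inf_relIndex_right]
  have hdvd (v : T) := relIndex_evenAt_dvd_two v.1 (twoSelmer K T)
  refine ⟨Subgroup.relIndex_iInf_ne_zero fun v => ne_zero_of_dvd_ne_zero two_ne_zero (hdvd v), ?_⟩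
  refine (Subgroup.relIndex_iInf_le _).trans ?_
  refine (Finset.prod_le_pow_card _ _ 2 fun v _ => Nat.le_of_dvd two_pos (hdvd v)).trans ?_
  rw [Finset.card_univ, ← Nat.card_eq_fintype_card, Nat.card_coe_set_eq]

/-! ### The Selmer group and the class group -/

theorem valuation_eq_exp_neg_count (v : HeightOneSpectrum R) (x : Kˣ) :
    v.valuation K (x : K) =
      WithZero.exp
        (-FractionalIdeal.count K v (toPrincipalIdeal R K x : FractionalIdeal R⁰ K)) := by
  classical
  obtain ⟨a, b, hb, hx⟩ := IsFractionRing.div_surjective (A := R) (x : K)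
  have hb0 : b ≠ 0 := nonZeroDivisors.ne_zero hb
  have ha0 : a ≠ 0 := by
    rintro rfl
    exact x.ne_zero (by simp [← hx])
  have hspan : (toPrincipalIdeal R K x : FractionalIdeal R⁰ K) =
      FractionalIdeal.spanSingleton R⁰ (algebraMap R K b)⁻¹ * ((Ideal.span {a} : Ideal R) :) := by
    rw [coe_toPrincipalIdeal, FractionalIdeal.coeIdeal_span_singleton,
      FractionalIdeal.spanSingleton_mul_spanSingleton, ← hx, div_eq_inv_mul]
  rw [FractionalIdeal.count_well_defined K v (Units.ne_zero _) hspan, ← hx, map_div₀,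
    v.valuation_of_algebraMap, v.valuation_of_algebraMap, v.intValuation_if_neg ha0,
    v.intValuation_if_neg hb0, ← WithZero.exp_sub]
  congr 1
  ring

theorem isSquare_exp_iff (n : ℤ) : IsSquare (WithZero.exp n) ↔ Even n := by
  refine ⟨?_, fun ⟨k, hk⟩ => ⟨WithZero.exp k, by rw [hk, WithZero.exp_add]⟩⟩
  rintro ⟨m, hm⟩
  have hm0 : m ≠ 0 := by
    rintro rfl
    simp at hm
  exact ⟨m.log, by rw [← WithZero.log_mul hm0 hm0, ← hm, WithZero.log_exp]⟩

theorem isSquare_of_forall_even_count (I : (FractionalIdeal R⁰ K)ˣ)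
    (h : ∀ v : HeightOneSpectrum R, Even (FractionalIdeal.count K v (I : FractionalIdeal R⁰ K))) :
    IsSquare I := by
  choose k hk using h
  set J : FractionalIdeal R⁰ K :=
    ∏ᶠ v : HeightOneSpectrum R, (v.asIdeal : FractionalIdeal R⁰ K) ^ k v
  have hJ : (I : FractionalIdeal R⁰ K) = J * J := by
    rw [← finprod_mul_distrib,
      ← FractionalIdeal.finprod_heightOneSpectrum_factorization' K I.ne_zero]
    · refine finprod_congr fun v => ?_
      rw [hk, ← zpow_add₀]
      exact FractionalIdeal.coeIdeal_ne_zero.2 v.ne_bot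
    all_goals
      refine Set.Finite.subset (FractionalIdeal.finite_factors (I : FractionalIdeal R⁰ K)) ?_
      intro v hv h0
      exact hv (by simp_all)
  exact ⟨Units.mk0 J (by rintro h0; simp [h0] at hJ), Units.ext hJ⟩

theorem twoSelmer_empty_eq_comap :
    twoSelmer K (∅ : Set (HeightOneSpectrum R)) =
      (Subgroup.square (FractionalIdeal R⁰ K)ˣ).comap (toPrincipalIdeal R K) := by
  ext x
  simp only [mem_twoSelmer, valuation_eq_exp_neg_count, isSquare_exp_iff, even_neg,
    Subgroup.mem_comap, Subgroup.mem_square, Set.mem_empty_iff_false, not_false_eq_true,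
    true_imp_iff]
  refine ⟨isSquare_of_forall_even_count _, ?_⟩
  rintro ⟨J, hJ⟩ v
  rw [hJ, Units.val_mul, FractionalIdeal.count_mul K v J.ne_zero J.ne_zero]
  exact ⟨_, rfl⟩

variable (R K) in
/-- The image of `Rˣ` in `Kˣ`. -/
noncomputable def unitImage : Subgroup Kˣ := (Units.map (algebraMap R K : R →* K)).range

theorem ker_toPrincipalIdeal :
    (toPrincipalIdeal R K).ker = unitImage R K := by
  ext x
  have hone : (1 : FractionalIdeal R⁰ K) = FractionalIdeal.spanSingleton R⁰ 1 :=
    FractionalIdeal.spanSingleton_one.symm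
  rw [MonoidHom.mem_ker, Units.ext_iff, coe_toPrincipalIdeal, Units.val_one, hone, eq_comm,
    FractionalIdeal.spanSingleton_eq_spanSingleton]
  simp [unitImage, Units.ext_iff, Units.smul_def, Algebra.smul_def]

theorem sq_injective_fractionalIdeal_units :
    Function.Injective (powMonoidHom 2 : (FractionalIdeal R⁰ K)ˣ →* (FractionalIdeal R⁰ K)ˣ) := by
  intro I J hIJ
  have hcount (v : HeightOneSpectrum R) :
      FractionalIdeal.count K v (I : FractionalIdeal R⁰ K) =
        FractionalIdeal.count K v (J : FractionalIdeal R⁰ K) := by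
    have h := congrArg (fun X : (FractionalIdeal R⁰ K)ˣ => FractionalIdeal.count K v X.1) hIJ
    simpa [FractionalIdeal.count_pow] using h
  ext1
  rw [← FractionalIdeal.finprod_heightOneSpectrum_factorization' K I.ne_zero,
    ← FractionalIdeal.finprod_heightOneSpectrum_factorization' K J.ne_zero]
  exact finprod_congr fun v => by rw [hcount v]

theorem card_ker_sq_classGroup :
    Nat.card (powMonoidHom 2 : ClassGroup R →* ClassGroup R).ker =
      (Subgroup.square Kˣ ⊔ unitImage R K).relIndex
        (twoSelmer K (∅ : Set (HeightOneSpectrum R))) := by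
  rw [twoSelmer_empty_eq_comap, ← ker_toPrincipalIdeal,
    ← card_ker_sq_quotient_range _ sq_injective_fractionalIdeal_units]
  refine Nat.card_congr ((ClassGroup.equiv K).toEquiv.subtypeEquiv fun c => ?_)
  simp [MonoidHom.mem_ker, ← map_pow]

end SelmerGroup

theorem odd_card_iff_card_ker_sq_le_one {G : Type*} [CommGroup G] [Finite G] :
    Odd (Nat.card G) ↔ Nat.card (powMonoidHom 2 : G →* G).ker ≤ 1 := by
  rw [Subgroup.card_le_one_iff_eq_bot, MonoidHom.ker_eq_bot_iff]
  refine ⟨fun h => (powCoprime (Nat.coprime_two_right.2 h)).injective, fun h => ?_⟩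
  by_contra heven
  obtain ⟨x, hx⟩ := exists_prime_orderOf_dvd_card' 2 (Nat.not_odd_iff_even.1 heven).two_dvd
  have hx1 : x = 1 := h (by simp [← hx, pow_orderOf_eq_one])
  simp [hx1] at hx

section SquareIndex

theorem index_even_eq_two_pow_finrank (M : Type*) [AddCommGroup M] [Module.Free ℤ M]
    [Module.Finite ℤ M] : (AddSubgroup.even M).index = 2 ^ Module.finrank ℤ M := by
  let b := Module.finBasis ℤ M
  let f : M →+ (Fin (Module.finrank ℤ M) → ZMod 2) :=
    ((Int.castAddHom (ZMod 2)).compLeft _).comp b.equivFun.toLinearMap.toAddMonoidHom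
  have hf : Function.Surjective f := by
    intro c
    obtain ⟨x, hx⟩ := b.equivFun.surjective fun i => ((c i).val : ℤ)
    exact ⟨x, funext fun i => by simp [f, hx]⟩
  have hker : AddSubgroup.even M = f.ker := by
    ext x
    have hfx : f x = 0 ↔ ∀ i, Even (b.repr x i) := by
      simp [f, funext_iff, ZMod.intCast_eq_zero_iff_even]
    rw [AddSubgroup.mem_even, AddMonoidHom.mem_ker, hfx]
    refine ⟨fun h i => h.map (b.coord i), fun h => ?_⟩
    choose c hc using h
    refine ⟨∑ i, c i • b i, ?_⟩
    conv_lhs => rw [← b.sum_repr x]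
    simp_rw [← Finset.sum_add_distrib, ← add_smul, hc]
  rw [hker, AddSubgroup.index_ker, AddMonoidHom.range_eq_top.2 hf]
  simp

theorem comap_mk'_square {G : Type*} [CommGroup G] (N : Subgroup G) :
    (Subgroup.square (G ⧸ N)).comap (QuotientGroup.mk' N) = Subgroup.square G ⊔ N := by
  have h : Subgroup.square (G ⧸ N) = (Subgroup.square G).map (QuotientGroup.mk' N) := by
    rw [map_square_eq_square_range, QuotientGroup.range_mk', ← MonoidHom.range_eq_map]
    ext
    simp [isSquare_iff_exists_sq, eq_comm]
  rw [h, Subgroup.comap_map_eq, QuotientGroup.ker_mk']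

theorem index_square_eq {G : Type*} [CommGroup G] (N : Subgroup G) [Finite N]
    (hN : ∀ x : G, x ^ 2 ∈ N → x ∈ N) :
    (Subgroup.square G).index =
      Nat.card (powMonoidHom 2 : N →* N).ker * (Subgroup.square (G ⧸ N)).index := by
  have hrange : (Subgroup.square G).subgroupOf N = (powMonoidHom 2 : N →* N).range := by
    ext ⟨x, hx⟩
    rw [Subgroup.mem_subgroupOf, Subgroup.mem_square, isSquare_iff_exists_sq]
    constructor
    · rintro ⟨y, rfl⟩
      exact ⟨⟨y, hN y hx⟩, rfl⟩
    · rintro ⟨y, hy⟩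
      exact ⟨y, congrArg Subtype.val hy.symm⟩
  have htop : (Subgroup.square G).relIndex (Subgroup.square G ⊔ N) =
      Nat.card (powMonoidHom 2 : N →* N).ker := by
    rw [sup_comm, Subgroup.relIndex_sup_right, Subgroup.relIndex, hrange, Subgroup.index_range]
  rw [← Subgroup.relIndex_mul_index (le_sup_left : _ ≤ Subgroup.square G ⊔ N), htop,
    ← comap_mk'_square, Subgroup.index_comap_of_surjective _ (QuotientGroup.mk'_surjective N)]

end SquareIndex

section Units

variable {K : Type*} [Field K] [NumberField K]

theorem card_ker_sq_torsion :
    Nat.card (powMonoidHom 2 : Units.torsion K →* Units.torsion K).ker = 2 := by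
  have hneg : (-1 : (𝓞 K)ˣ) ∈ Units.torsion K :=
    (CommGroup.mem_torsion (-1 : (𝓞 K)ˣ)).2
      (isOfFinOrder_iff_pow_eq_one.2 ⟨2, two_pos, by simp⟩)
  rw [Nat.card_eq_two_iff]
  refine ⟨1, ⟨⟨-1, hneg⟩, ?_⟩, ?_, ?_⟩
  · exact Subtype.ext (by simp)
  · intro h
    have h1 := congrArg (fun x => ((x.1.1 : (𝓞 K)ˣ) : K)) h
    norm_num at h1
  · refine Set.eq_univ_of_forall ?_
    rintro ⟨⟨x, hx⟩, hx2⟩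
    have hsq : x ^ 2 = 1 := congrArg Subtype.val hx2
    have hsq' : (x : 𝓞 K) ^ 2 = 1 := by rw [← Units.val_pow_eq_pow_val, hsq, Units.val_one]
    rcases sq_eq_one_iff.1 hsq' with h | h
    · exact Or.inl (Subtype.ext (Subtype.ext (Units.ext h)))
    · exact Or.inr (Subtype.ext (Subtype.ext (Units.ext h)))

theorem index_square_units : (Subgroup.square (𝓞 K)ˣ).index = 2 ^ (Units.rank K + 1) := by
  have htorsion (x : (𝓞 K)ˣ) (hx : x ^ 2 ∈ Units.torsion K) : x ∈ Units.torsion K :=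
    (CommGroup.mem_torsion x).2 (((CommGroup.mem_torsion _).1 hx).of_pow two_ne_zero)
  rw [index_square_eq (Units.torsion K) htorsion, card_ker_sq_torsion, pow_succ']
  congr 1
  have h := index_even_eq_two_pow_finrank (Additive ((𝓞 K)ˣ ⧸ Units.torsion K))
  rwa [Units.finrank_modTorsion] at h

theorem rank_units_add_one [IsTotallyReal K] :
    Units.rank K + 1 = Module.finrank ℚ K := by
  have h := InfinitePlace.card_eq_nrRealPlaces_add_nrComplexPlaces (K := K)
  rw [IsTotallyReal.nrComplexPlaces_eq_zero, ← IsTotallyReal.finrank] at h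
  have := Module.finrank_pos (R := ℚ) (M := K)
  rw [Units.rank]
  omega

end Units

section UnitSquares

variable {R K : Type*} [CommRing R] [IsDedekindDomain R] [Field K] [Algebra R K]
  [IsFractionRing R K]

theorem comap_square_units :
    (Subgroup.square Kˣ).comap (Units.map (algebraMap R K : R →* K)) = Subgroup.square Rˣ := by
  have : Fact (0 < 2) := ⟨two_pos⟩
  ext x
  have hx := SetLike.ext_iff.1 (selmerGroup.fromUnit_ker (R := R) (K := K) (n := 2)) x
  rw [MonoidHom.mem_ker, Subtype.ext_iff] at hx
  have hx' : (∃ y : Kˣ, y ^ 2 = Units.map (algebraMap R K : R →* K) x) ↔ ∃ y : Rˣ, y ^ 2 = x := by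
    simpa [selmerGroup.fromUnit, QuotientGroup.eq_one_iff] using hx
  simpa only [Subgroup.mem_comap, Subgroup.mem_square, isSquare_iff_exists_sq, eq_comm] using hx'

theorem unitImage_le_twoSelmer (T : Set (HeightOneSpectrum R)) :
    unitImage R K ≤ twoSelmer K T := by
  rintro _ ⟨u, rfl⟩
  refine mem_twoSelmer.2 fun v _ => ?_
  rw [← HeightOneSpectrum.valuationOfNeZero_eq, v.valuation_of_unit_eq]
  exact IsSquare.one

theorem twoSelmer_empty_eq_of_odd [Finite (ClassGroup R)] (h : Odd (Nat.card (ClassGroup R))) :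
    twoSelmer K (∅ : Set (HeightOneSpectrum R)) = Subgroup.square Kˣ ⊔ unitImage R K := by
  refine le_antisymm ?_ (sup_le (square_le_twoSelmer _) (unitImage_le_twoSelmer _))
  rw [← Subgroup.relIndex_eq_one, ← card_ker_sq_classGroup]
  exact le_antisymm (odd_card_iff_card_ker_sq_le_one.1 h) Nat.card_pos

theorem relIndex_square_unitImage {K : Type*} [Field K] [NumberField K] [IsTotallyReal K] :
    (Subgroup.square Kˣ).relIndex (Subgroup.square Kˣ ⊔ unitImage (𝓞 K) K) =
      2 ^ Module.finrank ℚ K := by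
  rw [sup_comm, Subgroup.relIndex_sup_right, unitImage, ← Subgroup.index_comap,
    comap_square_units, index_square_units, rank_units_add_one]

end UnitSquares

/-! ### Quadratic extensions -/

/-- The inclusion `Fˣ → Kˣ`. -/
abbrev unitsIncl (F K : Type*) [Field F] [Field K] [Algebra F K] : Fˣ →* Kˣ :=
  Units.map (algebraMap F K : F →* K)

/-- The norm `Kˣ → Fˣ`. -/
noncomputable abbrev unitsNorm (F K : Type*) [Field F] [Field K] [Algebra F K] : Kˣ →* Fˣ :=
  Units.map (Algebra.norm F : K →* F)

/-- `K = F(δ)` is a quadratic extension of `F` with `δ² = d`. -/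
structure IsSqrtExtension (F K : Type*) [Field F] [Field K] [Algebra F K] (d : F) (δ : K) :
    Prop where
  sq : δ ^ 2 = algebraMap F K d
  not_isSquare : ¬IsSquare d
  exists_eq_add_mul : ∀ x : K, ∃ a b : F, x = algebraMap F K a + algebraMap F K b * δ

namespace IsSqrtExtension

variable {F K : Type*} [Field F] [Field K] [Algebra F K] {d : F} {δ : K}

theorem linearIndependent (h : IsSqrtExtension F K d δ) : LinearIndependent F ![1, δ] := by
  rw [LinearIndependent.pair_iff]
  intro s t hst
  have hst' : algebraMap F K s + algebraMap F K t * δ = 0 := by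
    simpa [Algebra.smul_def] using hst
  rcases eq_or_ne t 0 with rfl | ht
  · simpa using hst'
  refine absurd ⟨-(s / t), (algebraMap F K).injective ?_⟩ h.not_isSquare
  have ht' : algebraMap F K t ≠ 0 := by simpa using ht
  have hδ : δ = algebraMap F K (-(s / t)) := by
    rw [map_neg, map_div₀]
    field_simp
    linear_combination hst'
  rw [map_mul, ← hδ, ← h.sq, pow_two]

theorem isQuadraticExtension (h : IsSqrtExtension F K d δ) :
    Algebra.IsQuadraticExtension F K := by
  have hspan : ⊤ ≤ Submodule.span F (Set.range ![1, δ]) := by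
    intro x _
    obtain ⟨a, b, rfl⟩ := h.exists_eq_add_mul x
    rw [Matrix.range_cons_cons_empty, Submodule.mem_span_pair]
    exact ⟨a, b, by simp [Algebra.smul_def]⟩
  exact ⟨by simp [Module.finrank_eq_card_basis (Module.Basis.mk h.linearIndependent hspan)]⟩

theorem ne_zero (h : IsSqrtExtension F K d δ) : δ ≠ 0 := by
  rintro rfl
  refine h.not_isSquare ⟨0, (algebraMap F K).injective ?_⟩
  rw [← h.sq, mul_zero, map_zero, zero_pow two_ne_zero]

theorem apply_eq_or_eq_neg (h : IsSqrtExtension F K d δ) (g : Gal(K/F)) :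
    g δ = δ ∨ g δ = -δ := by
  rw [← sq_eq_sq_iff_eq_or_eq_neg, ← map_pow, h.sq, AlgEquiv.commutes]

theorem gal_ext (h : IsSqrtExtension F K d δ) {f g : Gal(K/F)} (hfg : f δ = g δ) : f = g := by
  ext x
  obtain ⟨a, b, rfl⟩ := h.exists_eq_add_mul x
  simp [hfg]

theorem ne_one_iff [CharZero F] (h : IsSqrtExtension F K d δ) {g : Gal(K/F)} :
    g ≠ 1 ↔ g δ = -δ := by
  have : CharZero K := charZero_of_injective_algebraMap (algebraMap F K).injective
  have hδ : δ ≠ -δ := fun h0 => h.ne_zero (self_eq_neg.1 h0)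
  refine ⟨fun hg => (h.apply_eq_or_eq_neg g).resolve_left fun hgδ => hg (h.gal_ext hgδ), ?_⟩
  rintro hg rfl
  exact hδ hg

variable [CharZero F]

theorem isGalois (h : IsSqrtExtension F K d δ) : IsGalois F K :=
  have := h.isQuadraticExtension
  inferInstance

theorem exists_apply_eq_neg (h : IsSqrtExtension F K d δ) : ∃ σ : Gal(K/F), σ δ = -δ := by
  have := h.isQuadraticExtension
  have hcard : Nat.card Gal(K/F) = 2 := by
    rw [IsGalois.card_aut_eq_finrank, Algebra.IsQuadraticExtension.finrank_eq_two]
  obtain ⟨g, hg, -⟩ := (Nat.card_eq_two_iff' (1 : Gal(K/F))).1 hcard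
  exact ⟨g, h.ne_one_iff.1 hg⟩

theorem algebraMap_norm (h : IsSqrtExtension F K d δ) {σ : Gal(K/F)} (hσ : σ δ = -δ) (x : K) :
    algebraMap F K (Algebra.norm F x) = x * σ x := by
  classical
  have := h.isQuadraticExtension
  have huniv : (Finset.univ : Finset Gal(K/F)) = {1, σ} := by
    ext g
    by_cases hg : g = 1
    · simp [hg]
    · simp [h.gal_ext ((h.ne_one_iff.1 hg).trans hσ.symm)]
  rw [Algebra.norm_eq_prod_automorphisms, huniv, Finset.prod_pair (h.ne_one_iff.2 hσ).symm]
  rfl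

theorem norm_add_mul (h : IsSqrtExtension F K d δ) (a b : F) :
    Algebra.norm F (algebraMap F K a + algebraMap F K b * δ) = a ^ 2 - d * b ^ 2 := by
  obtain ⟨σ, hσ⟩ := h.exists_apply_eq_neg
  apply (algebraMap F K).injective
  rw [h.algebraMap_norm hσ]
  simp only [map_add, map_mul, AlgEquiv.commutes, hσ, map_sub, map_pow, ← h.sq]
  ring

theorem exists_eq_algebraMap_mul_sq (h : IsSqrtExtension F K d δ) {x : Kˣ}
    (hx : IsSquare (unitsNorm F K x)) :
    ∃ (f : Fˣ) (w : Kˣ), x = unitsIncl F K f * w ^ 2 := by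
  obtain ⟨σ, hσ⟩ := h.exists_apply_eq_neg
  obtain ⟨y, hy⟩ := hx
  have hnorm : (x : K) * σ x = algebraMap F K y ^ 2 := by
    rw [← h.algebraMap_norm hσ, ← map_pow, pow_two]
    exact congrArg _ (congrArg Units.val hy)
  -- Hilbert 90 for `x / y`, with `1 + x / y` as the explicit solution unless it vanishes.
  obtain ⟨w, hw, hxw⟩ : ∃ w : K, w ≠ 0 ∧ (x : K) * σ w = algebraMap F K y * w := by
    by_cases hz : algebraMap F K (y : F) + x = 0
    · refine ⟨δ, h.ne_zero, ?_⟩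
      rw [hσ, eq_neg_of_add_eq_zero_left hz]
      ring
    · refine ⟨algebraMap F K y + x, hz, ?_⟩
      rw [map_add, AlgEquiv.commutes, mul_add, hnorm]
      ring
  have := h.isQuadraticExtension
  refine ⟨y * (unitsNorm F K (Units.mk0 w hw))⁻¹, Units.mk0 w hw, ?_⟩
  have hσw : σ w ≠ 0 := by simpa using hw
  ext
  simp only [Units.coe_map, Units.val_mul, Units.val_inv_eq_inv_val, Units.val_mk0,
    MonoidHom.coe_coe, map_mul, map_inv₀, Units.val_pow_eq_pow_val, h.algebraMap_norm hσ]
  field_simp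
  exact hxw

end IsSqrtExtension

/-! ### Trivial inertia -/

section TrivialInertia

theorem ramificationIdx'_eq_one_of_inertia_eq_bot {A B : Type*} (G : Type*) [CommRing A]
    [IsDedekindDomain A] [CommRing B] [IsDedekindDomain B] [Algebra A B] [Module.Finite A B]
    [Module.Flat A B] [Module.IsTorsionFree A B] [Group G] [Finite G] [MulSemiringAction G B]
    [IsGaloisGroup G A B] {p : Ideal A} [p.IsPrime] [PerfectField p.ResidueField] (hp : p ≠ ⊥)
    {P : Ideal B} [P.IsPrime] [P.LiesOver p] (h : P.inertia G = ⊥) :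
    p.ramificationIdx' P = 1 := by
  rw [Ideal.ramificationIdx'_eq_ramificationIdx p P hp,
    ← Ideal.ramificationIdxIn_eq_ramificationIdx p P G,
    ← Ideal.card_inertia_eq_ramificationIdxIn (G := G) p P, h, Subgroup.card_bot]

theorem exists_liesOver {F : Type*} (K : Type*) [Field F] [Field K] [Algebra F K]
    (v : HeightOneSpectrum (𝓞 F)) :
    ∃ w : HeightOneSpectrum (𝓞 K), w.asIdeal.LiesOver v.asIdeal := by
  obtain ⟨P, hP, hPv⟩ := (inferInstance : Nonempty (v.asIdeal.primesOver (𝓞 K)))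
  exact ⟨⟨P, hP, Ideal.ne_bot_of_liesOver_of_ne_bot v.ne_bot P⟩, hPv⟩

variable {F K : Type*} [Field F] [NumberField F] [Field K] [NumberField K] [Algebra F K]

/-- The `2`-virtual units of `K`: the elements of `Kˣ` generating the square of a fractional
ideal. -/
noncomputable abbrev virtualUnits (K : Type*) [Field K] [NumberField K] : Subgroup Kˣ :=
  twoSelmer K (∅ : Set (HeightOneSpectrum (𝓞 K)))

variable (K) in
/-- The primes of `K` above `v` have trivial inertia groups, i.e. `v` is unramified in `K`. -/
def HasTrivialInertia (v : HeightOneSpectrum (𝓞 F)) : Prop :=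
  ∀ P : Ideal (𝓞 K), P.IsPrime → P.LiesOver v.asIdeal → P.inertia Gal(K/F) = ⊥

theorem HasTrivialInertia.isSquare_valuation [IsGalois F K] {v : HeightOneSpectrum (𝓞 F)}
    (hv : HasTrivialInertia K v) {f : Fˣ} (hf : unitsIncl F K f ∈ virtualUnits K) :
    IsSquare (v.valuation F (f : F)) := by
  obtain ⟨w, hw⟩ := exists_liesOver K v
  have hram : v.asIdeal.ramificationIdx' w.asIdeal = 1 :=
    ramificationIdx'_eq_one_of_inertia_eq_bot Gal(K/F) v.ne_bot (hv _ w.isPrime hw)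
  have hval := HeightOneSpectrum.valuation_liesOver K v w (f : F)
  rw [hram, pow_one] at hval
  exact hval ▸ mem_twoSelmer.1 hf w (Set.notMem_empty w)

end TrivialInertia

/-! ### The ambiguous class number inequality -/

section AmbiguousClass

section VirtualUnits

variable {K : Type*} [Field K] [NumberField K]

theorem mem_virtualUnits_of_span_eq_sq {x : Kˣ} {a : 𝓞 K} (ha : algebraMap (𝓞 K) K a = x)
    {I : Ideal (𝓞 K)} (hI : Ideal.span {a} = I ^ 2) : x ∈ virtualUnits K := by
  have hspan : (toPrincipalIdeal (𝓞 K) K x : FractionalIdeal (𝓞 K)⁰ K) =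
      (I : FractionalIdeal (𝓞 K)⁰ K) ^ 2 := by
    rw [coe_toPrincipalIdeal, ← ha, ← FractionalIdeal.coeIdeal_span_singleton, hI,
      FractionalIdeal.coeIdeal_pow]
  have hI0 : (I : FractionalIdeal (𝓞 K)⁰ K) ≠ 0 := fun h =>
    (toPrincipalIdeal (𝓞 K) K x).ne_zero (by rw [hspan, h, zero_pow two_ne_zero])
  rw [virtualUnits, twoSelmer_empty_eq_comap, Subgroup.mem_comap, Subgroup.mem_square,
    isSquare_iff_exists_sq]
  exact ⟨Units.mk0 _ hI0, Units.ext hspan⟩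

theorem exists_integer_mul_sq_of_mem_virtualUnits {x : Kˣ} (hx : x ∈ virtualUnits K) :
    ∃ (a : 𝓞 K) (y : Kˣ) (I : Ideal (𝓞 K)),
      (x : K) = algebraMap (𝓞 K) K a * (y : K) ^ 2 ∧ Ideal.span {a} = I ^ 2 := by
  rw [virtualUnits, twoSelmer_empty_eq_comap, Subgroup.mem_comap, Subgroup.mem_square,
    isSquare_iff_exists_sq] at hx
  obtain ⟨J, hJ⟩ := hx
  obtain ⟨c, I, hc, hcI⟩ :=
    FractionalIdeal.exists_eq_spanSingleton_mul (J : FractionalIdeal (𝓞 K)⁰ K)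
  have hc' : algebraMap (𝓞 K) K c ≠ 0 := by simpa using hc
  have hxI : FractionalIdeal.spanSingleton (𝓞 K)⁰ ((x : K) * algebraMap (𝓞 K) K c ^ 2) =
      (I : FractionalIdeal (𝓞 K)⁰ K) ^ 2 := by
    rw [← FractionalIdeal.spanSingleton_mul_spanSingleton, ← FractionalIdeal.spanSingleton_pow,
      ← coe_toPrincipalIdeal, hJ, Units.val_pow_eq_pow_val, hcI, ← mul_pow, mul_right_comm,
      FractionalIdeal.spanSingleton_mul_spanSingleton, inv_mul_cancel₀ hc',
      FractionalIdeal.spanSingleton_one, one_mul]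
  rw [← FractionalIdeal.coeIdeal_pow] at hxI
  obtain ⟨a, -, ha⟩ := FractionalIdeal.mem_coeIdeal _ |>.1
    (hxI ▸ FractionalIdeal.mem_spanSingleton_self (𝓞 K)⁰ _)
  refine ⟨a, (Units.mk0 _ hc')⁻¹, I, ?_, FractionalIdeal.coeIdeal_injective (K := K) ?_⟩
  · rw [ha, Units.val_inv_eq_inv_val, Units.val_mk0]
    field_simp
  · change (↑(Ideal.span {a} : Ideal (𝓞 K)) : FractionalIdeal (𝓞 K)⁰ K) = _
    rw [FractionalIdeal.coeIdeal_span_singleton, ha, hxI]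

theorem relIndex_square_virtualUnits_eq (F : Type*) [Field F] [Algebra F K] :
    (Subgroup.square Kˣ).relIndex (virtualUnits K) =
      (Subgroup.square Kˣ).relIndex
          (virtualUnits K ⊓ (Subgroup.square Fˣ).comap (unitsNorm F K)) *
        (Subgroup.square Fˣ).relIndex ((virtualUnits K).map (unitsNorm F K)) := by
  have hle : Subgroup.square Kˣ ≤
      virtualUnits K ⊓ (Subgroup.square Fˣ).comap (unitsNorm F K) :=
    le_inf (square_le_twoSelmer _) fun _ hx => hx.map (unitsNorm F K)
  rw [← Subgroup.relIndex_mul_relIndex _ _ _ hle inf_le_left, Subgroup.inf_relIndex_left,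
    Subgroup.relIndex_comap]

end VirtualUnits

variable {F K : Type*} [Field F] [NumberField F] [Field K] [NumberField K] [Algebra F K]

theorem unitsNorm_mem_virtualUnits {x : Kˣ} (hx : x ∈ virtualUnits K) :
    unitsNorm F K x ∈ virtualUnits F := by
  obtain ⟨a, y, I, hxy, hI⟩ := exists_integer_mul_sq_of_mem_virtualUnits hx
  have hy : y ^ 2 ∈ Subgroup.square Kˣ := IsSquare.sq y
  have hnorm : unitsNorm F K (x / y ^ 2) ∈ virtualUnits F := by
    refine mem_virtualUnits_of_span_eq_sq (a := Algebra.intNorm (𝓞 F) (𝓞 K) a)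
      (I := Ideal.relNorm (𝓞 F) I) ?_ (by rw [← map_pow, ← hI, Ideal.relNorm_singleton])
    rw [Algebra.algebraMap_intNorm (A := 𝓞 F) (K := F) (L := K) (B := 𝓞 K)]
    simp [hxy]
  rw [← div_mul_cancel x (y ^ 2), map_mul]
  exact mul_mem hnorm (square_le_twoSelmer _ (hy.map _))

variable (F K) in
/-- The units of `F` which are, up to squares of `Fˣ`, norms of `2`-virtual units of `K`. -/
noncomputable def normUnits : Subgroup (𝓞 F)ˣ :=
  ((virtualUnits K).map (unitsNorm F K) ⊔ Subgroup.square Fˣ).comap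
    (Units.map (algebraMap (𝓞 F) F : 𝓞 F →* F))

theorem mul_index_normUnits [IsTotallyReal F] (hF : Odd (Nat.card (ClassGroup (𝓞 F)))) :
    (Subgroup.square Fˣ).relIndex ((virtualUnits K).map (unitsNorm F K)) * (normUnits F K).index =
      2 ^ Module.finrank ℚ F := by
  set N := (virtualUnits K).map (unitsNorm F K)
  have hN : N ≤ Subgroup.square Fˣ ⊔ unitImage (𝓞 F) F := by
    rw [← twoSelmer_empty_eq_of_odd hF]
    rintro _ ⟨x, hx, rfl⟩
    exact unitsNorm_mem_virtualUnits hx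
  have hindex : (normUnits F K).index =
      (N ⊔ Subgroup.square Fˣ).relIndex (Subgroup.square Fˣ ⊔ unitImage (𝓞 F) F) := by
    have hsup : Subgroup.square Fˣ ⊔ unitImage (𝓞 F) F =
        unitImage (𝓞 F) F ⊔ (N ⊔ Subgroup.square Fˣ) :=
      (sup_eq_right.2 hN).symm.trans (by ac_rfl)
    rw [hsup, Subgroup.relIndex_sup_right, normUnits, Subgroup.index_comap, unitImage]
  rw [hindex, ← Subgroup.relIndex_sup_right (H := N) (K := Subgroup.square Fˣ),
    Subgroup.relIndex_mul_relIndex _ _ _ le_sup_right (sup_le hN le_sup_left),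
    relIndex_square_unitImage]

theorem relIndex_square_twoSelmer_ne_zero_and_le [IsTotallyReal F]
    (hF : Odd (Nat.card (ClassGroup (𝓞 F)))) {T : Set (HeightOneSpectrum (𝓞 F))} (hT : T.Finite) :
    (Subgroup.square Fˣ).relIndex (twoSelmer F T) ≠ 0 ∧
      (Subgroup.square Fˣ).relIndex (twoSelmer F T) ≤ 2 ^ T.ncard * 2 ^ Module.finrank ℚ F := by
  have hle : virtualUnits F ≤ twoSelmer F T := fun x hx =>
    mem_twoSelmer.2 fun v _ => mem_twoSelmer.1 hx v (Set.notMem_empty v)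
  obtain ⟨hne, hbound⟩ := relIndex_twoSelmer_ne_zero_and_le (K := F) hT
  have hempty : (Subgroup.square Fˣ).relIndex (virtualUnits F) = 2 ^ Module.finrank ℚ F := by
    rw [virtualUnits, twoSelmer_empty_eq_of_odd hF, relIndex_square_unitImage]
  rw [← Subgroup.relIndex_mul_relIndex _ _ _ (square_le_twoSelmer _) hle, hempty, mul_comm]
  exact ⟨mul_ne_zero hne (by positivity), Nat.mul_le_mul_right _ hbound⟩

variable {d : F} {δ : K}

variable {T : Set (HeightOneSpectrum (𝓞 F))}

theorem mem_twoSelmer_of_unitsIncl_mem [IsGalois F K] (hur : ∀ v ∉ T, HasTrivialInertia K v)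
    {f : Fˣ} (hf : unitsIncl F K f ∈ virtualUnits K) : f ∈ twoSelmer F T :=
  mem_twoSelmer.2 fun v hv => (hur v hv).isSquare_valuation hf

theorem IsSqrtExtension.two_le_relIndex_square (h : IsSqrtExtension F K d δ)
    (hur : ∀ v ∉ T, HasTrivialInertia K v)
    (hne : (Subgroup.square Fˣ).relIndex (twoSelmer F T) ≠ 0) :
    2 ≤ (Subgroup.square Fˣ).relIndex
      ((Subgroup.square Kˣ).comap (unitsIncl F K) ⊓ twoSelmer F T) := by
  have := h.isGalois
  set X := (Subgroup.square Kˣ).comap (unitsIncl F K) ⊓ twoSelmer F T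
  have hX : (Subgroup.square Fˣ).relIndex X ≠ 0 := fun h0 =>
    hne (Subgroup.relIndex_eq_zero_of_le_right inf_le_right h0)
  have hd : d ≠ 0 := by
    rintro rfl
    exact h.not_isSquare IsSquare.zero
  have hdδ : unitsIncl F K (Units.mk0 d hd) ∈ Subgroup.square Kˣ :=
    ⟨Units.mk0 δ h.ne_zero, Units.ext (by simp [← pow_two, h.sq])⟩
  have hdX : Units.mk0 d hd ∈ X :=
    ⟨hdδ, mem_twoSelmer_of_unitsIncl_mem hur (square_le_twoSelmer _ hdδ)⟩
  have hX1 : (Subgroup.square Fˣ).relIndex X ≠ 1 := fun h1 =>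
    h.not_isSquare ((Subgroup.relIndex_eq_one.1 h1 hdX).map (Units.coeHom F))
  omega

theorem IsSqrtExtension.two_mul_relIndex_le (h : IsSqrtExtension F K d δ)
    (hur : ∀ v ∉ T, HasTrivialInertia K v)
    (hne : (Subgroup.square Fˣ).relIndex (twoSelmer F T) ≠ 0) :
    2 * (Subgroup.square Kˣ).relIndex
        (virtualUnits K ⊓ (Subgroup.square Fˣ).comap (unitsNorm F K)) ≤
      (Subgroup.square Fˣ).relIndex (twoSelmer F T) := by
  have := h.isGalois
  set M := virtualUnits K ⊓ (Subgroup.square Fˣ).comap (unitsNorm F K)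
  set X := (Subgroup.square Kˣ).comap (unitsIncl F K) ⊓ twoSelmer F T
  have hM : M ≤ (twoSelmer F T).map (unitsIncl F K) ⊔ Subgroup.square Kˣ := by
    rintro x ⟨hx, hxnorm⟩
    obtain ⟨f, w, rfl⟩ := h.exists_eq_algebraMap_mul_sq hxnorm
    have hw : w ^ 2 ∈ Subgroup.square Kˣ := IsSquare.sq w
    have hf := (Subgroup.mul_mem_cancel_right _ (square_le_twoSelmer _ hw)).1 hx
    exact Subgroup.mul_mem_sup ⟨f, mem_twoSelmer_of_unitsIncl_mem hur hf, rfl⟩ hw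
  have hmul : (Subgroup.square Fˣ).relIndex X * X.relIndex (twoSelmer F T) =
      (Subgroup.square Fˣ).relIndex (twoSelmer F T) :=
    Subgroup.relIndex_mul_relIndex _ _ _
      (le_inf (fun _ hx => hx.map (unitsIncl F K)) (square_le_twoSelmer _)) inf_le_right
  have hX : X.relIndex (twoSelmer F T) =
      (Subgroup.square Kˣ).relIndex ((twoSelmer F T).map (unitsIncl F K) ⊔ Subgroup.square Kˣ) := by
    rw [Subgroup.inf_relIndex_right, Subgroup.relIndex_comap, Subgroup.relIndex_sup_right]
  have hX0 : X.relIndex (twoSelmer F T) ≠ 0 := right_ne_zero_of_mul (hmul ▸ hne)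
  rw [← hmul]
  exact Nat.mul_le_mul (h.two_le_relIndex_square hur hne)
    (hX ▸ Subgroup.relIndex_le_of_le_right hM (hX ▸ hX0))

theorem two_pow_mul_card_ker_sq [IsTotallyReal K] :
    2 ^ Module.finrank ℚ K * Nat.card (powMonoidHom 2 : ClassGroup (𝓞 K) →* _).ker =
      (Subgroup.square Kˣ).relIndex (virtualUnits K) := by
  rw [card_ker_sq_classGroup (K := K), ← relIndex_square_unitImage]
  exact Subgroup.relIndex_mul_relIndex _ _ _ le_sup_left
    (sup_le (square_le_twoSelmer _) (unitImage_le_twoSelmer _))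

theorem IsSqrtExtension.two_mul_index_normUnits_mul_card_le [IsTotallyReal F] [IsTotallyReal K]
    (h : IsSqrtExtension F K d δ) (hF : Odd (Nat.card (ClassGroup (𝓞 F)))) (hT : T.Finite)
    (hur : ∀ v ∉ T, HasTrivialInertia K v) :
    2 * (normUnits F K).index * Nat.card (powMonoidHom 2 : ClassGroup (𝓞 K) →* _).ker ≤
      2 ^ T.ncard := by
  have := h.isQuadraticExtension
  have hfinrank : Module.finrank ℚ K = Module.finrank ℚ F + Module.finrank ℚ F := by
    rw [← Module.finrank_mul_finrank ℚ F K, Algebra.IsQuadraticExtension.finrank_eq_two F K,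
      mul_two]
  obtain ⟨hne, hle⟩ := relIndex_square_twoSelmer_ne_zero_and_le hF hT
  refine Nat.le_of_mul_le_mul_left ?_ (pow_pos two_pos (Module.finrank ℚ K))
  set c := Nat.card (powMonoidHom 2 : ClassGroup (𝓞 K) →* _).ker
  set i := (normUnits F K).index
  set β := (Subgroup.square Fˣ).relIndex ((virtualUnits K).map (unitsNorm F K))
  set μ := (Subgroup.square Kˣ).relIndex
    (virtualUnits K ⊓ (Subgroup.square Fˣ).comap (unitsNorm F K))
  calc 2 ^ Module.finrank ℚ K * (2 * i * c) = 2 ^ Module.finrank ℚ K * c * (2 * i) := by ring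
    _ = 2 * μ * (β * i) := by
      rw [two_pow_mul_card_ker_sq, relIndex_square_virtualUnits_eq F]
      ring
    _ ≤ 2 ^ T.ncard * 2 ^ Module.finrank ℚ F * 2 ^ Module.finrank ℚ F := by
      rw [mul_index_normUnits hF]
      exact Nat.mul_le_mul_right _ ((h.two_mul_relIndex_le hur hne).trans hle)
    _ = 2 ^ Module.finrank ℚ K * 2 ^ T.ncard := by
      rw [hfinrank]
      ring

theorem index_normUnits_ne_zero [IsTotallyReal F] (hF : Odd (Nat.card (ClassGroup (𝓞 F)))) :
    (normUnits F K).index ≠ 0 :=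
  right_ne_zero_of_mul (a := (Subgroup.square Fˣ).relIndex ((virtualUnits K).map (unitsNorm F K)))
    (by rw [mul_index_normUnits hF]; positivity)

end AmbiguousClass

section AmbiguousClassCorollaries

theorem four_le_index {G : Type*} [CommGroup G] {H : Subgroup G} (h0 : H.index ≠ 0)
    (hsq : ∀ x : G, x ^ 2 ∈ H) {u w : G} (hu : u ∉ H) (hw : w ∉ H) (huw : u * w ∉ H) :
    4 ≤ H.index := by
  set H' := H ⊔ Subgroup.zpowers u
  have hw' : w ∉ H' := by
    intro hmem
    obtain ⟨x, hx, _, ⟨k, rfl⟩, rfl⟩ := Subgroup.mem_sup.1 hmem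
    obtain ⟨j, rfl | rfl⟩ := Int.even_or_odd' k
    · exact hw (mul_mem hx (by simpa only [mul_comm 2 j, zpow_mul, zpow_ofNat] using hsq (u ^ j)))
    · refine huw ?_
      have hsplit : u * (x * u ^ (2 * j + 1)) = x * (u ^ (j + 1)) ^ 2 := by
        rw [mul_left_comm, ← zpow_one_add, ← zpow_natCast, ← zpow_mul]
        congr 2
        push_cast
        ring
      exact hsplit ▸ mul_mem hx (hsq _)
  have hmul := Subgroup.relIndex_mul_index (H := H) (K := H') le_sup_left
  have hrel : H.relIndex H' ≠ 1 := fun h1 => hu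
    (Subgroup.relIndex_eq_one.1 h1 (Subgroup.mem_sup_right (Subgroup.mem_zpowers u)))
  have hindex : H'.index ≠ 1 := fun h1 => hw' (Subgroup.index_eq_one.1 h1 ▸ Subgroup.mem_top w)
  rw [← hmul] at h0 ⊢
  obtain ⟨hrel0, hindex0⟩ := mul_ne_zero_iff.1 h0
  exact Nat.mul_le_mul (show 2 ≤ H.relIndex H' by omega) (show 2 ≤ H'.index by omega)

theorem sq_mem_normUnits {F K : Type*} [Field F] [Field K] [NumberField K] [Algebra F K]
    (u : (𝓞 F)ˣ) : u ^ 2 ∈ normUnits F K :=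
  Subgroup.mem_sup_right ((IsSquare.sq u).map _)

variable {F K : Type*} [Field F] [NumberField F] [Field K] [NumberField K] [Algebra F K]

variable {d : F} {δ : K}

theorem IsSqrtExtension.exists_norm_form (h : IsSqrtExtension F K d δ) {u : (𝓞 F)ˣ}
    (hu : u ∈ normUnits F K) :
    ∃ a b y : F, y ≠ 0 ∧ ((u : 𝓞 F) : F) * y ^ 2 = a ^ 2 - d * b ^ 2 := by
  obtain ⟨_, ⟨x, -, rfl⟩, z, ⟨c, rfl⟩, hz⟩ := Subgroup.mem_sup.1 hu
  obtain ⟨a, b, hab⟩ := h.exists_eq_add_mul x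
  refine ⟨a, b, (c⁻¹ : Fˣ), Units.ne_zero _, ?_⟩
  have hz' : Algebra.norm F (x : K) * ((c : F) * c) = ((u : 𝓞 F) : F) := congrArg Units.val hz
  rw [← h.norm_add_mul, ← hab, ← hz', Units.val_inv_eq_inv_val]
  field_simp

theorem IsSqrtExtension.exists_unit_norm_form (h : IsSqrtExtension F K d δ)
    (hK : Odd (Nat.card (ClassGroup (𝓞 K)))) {u : (𝓞 F)ˣ} (hu : u ∈ normUnits F K) :
    ∃ (η : (𝓞 K)ˣ) (a b y : F),
      ((η : 𝓞 K) : K) = algebraMap F K a + algebraMap F K b * δ ∧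
        y ≠ 0 ∧ ((u : 𝓞 F) : F) * y ^ 2 = a ^ 2 - d * b ^ 2 := by
  obtain ⟨_, ⟨x, hx, rfl⟩, z, ⟨c, rfl⟩, hz⟩ := Subgroup.mem_sup.1 hu
  rw [SetLike.mem_coe, virtualUnits, twoSelmer_empty_eq_of_odd hK] at hx
  obtain ⟨_, ⟨w, rfl⟩, _, ⟨η, rfl⟩, rfl⟩ := Subgroup.mem_sup.1 hx
  obtain ⟨a, b, hab⟩ := h.exists_eq_add_mul ((η : 𝓞 K) : K)
  have hw : Algebra.norm F (w : K) ≠ 0 := Algebra.norm_ne_zero_iff.2 w.ne_zero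
  refine ⟨η, a, b, (Algebra.norm F (w : K) * c)⁻¹, hab, by simp [hw], ?_⟩
  have hz' : Algebra.norm F ((w : K) * w * ((η : 𝓞 K) : K)) * ((c : F) * c) = ((u : 𝓞 F) : F) :=
    congrArg Units.val hz
  rw [← h.norm_add_mul, ← hab, ← hz', map_mul, map_mul]
  field_simp

variable [IsTotallyReal F] [IsTotallyReal K] {T : Set (HeightOneSpectrum (𝓞 F))}

theorem IsSqrtExtension.odd_and_normUnits_eq_top (h : IsSqrtExtension F K d δ)
    (hF : Odd (Nat.card (ClassGroup (𝓞 F)))) (hT : T.Finite)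
    (hur : ∀ v ∉ T, HasTrivialInertia K v) (hcard : T.ncard ≤ 1) :
    Odd (Nat.card (ClassGroup (𝓞 K))) ∧ normUnits F K = ⊤ := by
  have hbound := (h.two_mul_index_normUnits_mul_card_le hF hT hur).trans
    (Nat.pow_le_pow_right two_pos hcard)
  have hi := Nat.pos_of_ne_zero (index_normUnits_ne_zero (K := K) hF)
  have hc : 0 < Nat.card (powMonoidHom 2 : ClassGroup (𝓞 K) →* _).ker := Nat.card_pos
  rw [odd_card_iff_card_ker_sq_le_one, ← Subgroup.index_eq_one]
  constructor <;> nlinarith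

theorem IsSqrtExtension.odd_of_notMem_normUnits (h : IsSqrtExtension F K d δ)
    (hF : Odd (Nat.card (ClassGroup (𝓞 F)))) (hT : T.Finite)
    (hur : ∀ v ∉ T, HasTrivialInertia K v) (hcard : T.ncard ≤ 2) {u : (𝓞 F)ˣ}
    (hu : u ∉ normUnits F K) : Odd (Nat.card (ClassGroup (𝓞 K))) := by
  have hbound := (h.two_mul_index_normUnits_mul_card_le hF hT hur).trans
    (Nat.pow_le_pow_right two_pos hcard)
  have hi : 2 ≤ (normUnits F K).index := by
    have h0 := index_normUnits_ne_zero (K := K) hF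
    have h1 : (normUnits F K).index ≠ 1 := fun h1 =>
      hu (Subgroup.index_eq_one.1 h1 ▸ Subgroup.mem_top u)
    omega
  rw [odd_card_iff_card_ker_sq_le_one]
  nlinarith

theorem IsSqrtExtension.card_ker_sq_le_two (h : IsSqrtExtension F K d δ)
    (hF : Odd (Nat.card (ClassGroup (𝓞 F)))) (hT : T.Finite)
    (hur : ∀ v ∉ T, HasTrivialInertia K v) (hcard : T.ncard ≤ 4) {u w : (𝓞 F)ˣ}
    (hu : u ∉ normUnits F K) (hw : w ∉ normUnits F K) (huw : u * w ∉ normUnits F K) :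
    Nat.card (powMonoidHom 2 : ClassGroup (𝓞 K) →* _).ker ≤ 2 := by
  have hbound := (h.two_mul_index_normUnits_mul_card_le hF hT hur).trans
    (Nat.pow_le_pow_right two_pos hcard)
  have hi := four_le_index (index_normUnits_ne_zero hF) sq_mem_normUnits hu hw huw
  nlinarith

end AmbiguousClassCorollaries

section Unramified

theorem exists_ringOfIntegers_sq_eq {K : Type*} [Field K] {r : K} {a : 𝓞 K} (h : r ^ 2 = a) :
    ∃ x : 𝓞 K, (x : K) = r ∧ x ^ 2 = a := by
  have hr : IsIntegral ℤ r := .of_pow two_pos (by rw [h]; exact a.isIntegral_coe)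
  exact ⟨⟨r, hr⟩, rfl, RingOfIntegers.ext h⟩

variable {F K : Type*} [Field F] [NumberField F] [Field K] [Algebra F K]

theorem IsSqrtExtension.hasTrivialInertia {d : F} {δ : K} (h : IsSqrtExtension F K d δ)
    {v : HeightOneSpectrum (𝓞 F)} {σ : Gal(K/F)} (hσ : σ δ = -δ) (θ : 𝓞 K) {m : 𝓞 F}
    (hm : m ∉ v.asIdeal) (hθ : (σ • θ - θ) ^ 2 = algebraMap (𝓞 F) (𝓞 K) m) :
    HasTrivialInertia K v := by
  intro P _ hPv
  rw [eq_bot_iff]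
  intro g hg
  by_contra hne
  obtain rfl : g = σ := h.gal_ext ((h.ne_one_iff.1 hne).trans hσ.symm)
  refine hm ?_
  rw [hPv.over, Ideal.mem_comap, ← hθ]
  exact Ideal.pow_mem_of_mem _ (hg θ) 2 two_pos

theorem IsSqrtExtension.hasTrivialInertia_of_notMem {d : 𝓞 F} {δ : K}
    (h : IsSqrtExtension F K (d : F) δ) {v : HeightOneSpectrum (𝓞 F)} (h2 : (2 : 𝓞 F) ∉ v.asIdeal)
    (hd : d ∉ v.asIdeal) : HasTrivialInertia K v := by
  obtain ⟨σ, hσ⟩ := h.exists_apply_eq_neg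
  obtain ⟨x, rfl, hx⟩ := exists_ringOfIntegers_sq_eq (a := algebraMap (𝓞 F) (𝓞 K) d) h.sq
  have hσx : σ • x = -x := RingOfIntegers.ext hσ
  refine h.hasTrivialInertia hσ x (m := 2 * 2 * d) (fun hm => ?_) ?_
  · rcases v.isPrime.mem_or_mem hm with hm | hm
    · exact h2 (v.isPrime.mem_or_mem hm |>.elim id id)
    · exact hd hm
  · rw [hσx, map_mul, ← hx, map_mul, map_ofNat]
    ring

theorem IsSqrtExtension.hasTrivialInertia_of_mul_eq {d c r k : 𝓞 F} {δ : K}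
    (h : IsSqrtExtension F K (d : F) δ) (hr : r ^ 2 = c) (hdc : d * c = 4 * k + 1)
    {v : HeightOneSpectrum (𝓞 F)} (hd : d ∉ v.asIdeal) (hc : c ∉ v.asIdeal) :
    HasTrivialInertia K v := by
  have : CharZero K := charZero_of_injective_algebraMap (algebraMap F K).injective
  obtain ⟨σ, hσ⟩ := h.exists_apply_eq_neg
  have hsq : (algebraMap F K r * δ) ^ 2 = algebraMap F K (d * c : 𝓞 F) := by
    rw [mul_pow, h.sq, ← map_pow, ← map_mul, ← map_pow, hr, ← map_mul, mul_comm]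
  have hint : IsIntegral (𝓞 F) ((1 + algebraMap F K r * δ) / 2) := by
    refine ⟨Polynomial.X ^ 2 - Polynomial.X - Polynomial.C k, by monicity!, ?_⟩
    have hk : algebraMap F K (d * c : 𝓞 F) = 4 * algebraMap (𝓞 F) K k + 1 := by
      rw [← IsScalarTower.algebraMap_apply (𝓞 F) F K, hdc, map_add, map_mul, map_ofNat, map_one]
    simp only [Polynomial.eval₂_sub, Polynomial.eval₂_X_pow, Polynomial.eval₂_X,
      Polynomial.eval₂_C]
    linear_combination (hsq.trans hk) / 4
  let θ : 𝓞 K := ⟨_, isIntegral_trans _ hint⟩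
  refine h.hasTrivialInertia hσ θ (m := d * c) (fun hm => (v.isPrime.mem_or_mem hm).elim hd hc)
    (RingOfIntegers.ext ?_)
  change (σ ((1 + algebraMap F K r * δ) / 2) - (1 + algebraMap F K r * δ) / 2) ^ 2 =
    algebraMap F K (d * c : 𝓞 F)
  rw [← hsq, map_div₀, map_add, map_mul, hσ, AlgEquiv.commutes, map_one, map_ofNat]
  ring

end Unramified

/-! ### Multiquadratic fields -/

/-- `F` is generated over `ℚ` by square roots `r a` of the natural numbers `a ∈ S`. -/
structure IsMultiquadratic (F : Type*) [Field F] [CharZero F] (S : Finset ℕ) (r : ℕ → F) :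
    Prop where
  sq : ∀ a ∈ S, r a ^ 2 = a
  adjoin_eq_top : IntermediateField.adjoin ℚ (r '' S) = ⊤

namespace IsMultiquadratic

variable {F : Type*} [Field F] [CharZero F] {S : Finset ℕ} {r : ℕ → F}

theorem algHom_ext (h : IsMultiquadratic F S r) {E : Type*} [Field E] [Algebra ℚ E]
    {f g : F →ₐ[ℚ] E} (hfg : ∀ a ∈ S, f (r a) = g (r a)) : f = g := by
  have htop : (⊤ : IntermediateField ℚ F) ≤
      (AlgHom.equalizer f g).toIntermediateField fun x hx => by
        rw [AlgHom.mem_equalizer] at hx ⊢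
        rw [map_inv₀, map_inv₀, hx] := by
    rw [← h.adjoin_eq_top, IntermediateField.adjoin_le_iff]
    rintro _ ⟨a, ha, rfl⟩
    exact hfg a ha
  ext x
  exact htop (IntermediateField.mem_top (x := x))

theorem gal_ext (h : IsMultiquadratic F S r) {f g : Gal(F/ℚ)}
    (hfg : ∀ a ∈ S, f (r a) = g (r a)) : f = g :=
  AlgEquiv.coe_toAlgHom_injective (h.algHom_ext hfg)

theorem gal_apply_eq_or_eq_neg (h : IsMultiquadratic F S r) (g : Gal(F/ℚ)) {a : ℕ} (ha : a ∈ S) :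
    g (r a) = r a ∨ g (r a) = -r a := by
  rw [← sq_eq_sq_iff_eq_or_eq_neg, ← map_pow, h.sq a ha, map_natCast]

theorem gal_mul_self (h : IsMultiquadratic F S r) (g : Gal(F/ℚ)) : g * g = 1 := by
  refine h.gal_ext fun a ha => ?_
  rcases h.gal_apply_eq_or_eq_neg g ha with hg | hg <;> simp [hg]

theorem isGalois [Algebra.IsAlgebraic ℚ F] (h : IsMultiquadratic F S r) : IsGalois ℚ F := by
  have hnormal : Normal ℚ F := by
    refine normal_iff.2 fun x => ⟨Algebra.IsIntegral.isIntegral x, ?_⟩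
    refine IntermediateField.splits_of_mem_adjoin ℚ F (S := r '' S) ?_
      (h.adjoin_eq_top ▸ IntermediateField.mem_top)
    rintro _ ⟨a, ha, rfl⟩
    refine ⟨Algebra.IsIntegral.isIntegral _, ?_⟩
    have hdvd : minpoly ℚ (r a) ∣ Polynomial.X ^ 2 - Polynomial.C (a : ℚ) :=
      minpoly.dvd _ _ (by simp [h.sq a ha])
    have hfactor : (Polynomial.X ^ 2 - Polynomial.C (a : ℚ)).map (algebraMap ℚ F) =
        (Polynomial.X - Polynomial.C (r a)) * (Polynomial.X - Polynomial.C (-r a)) := by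
      have ha2 : algebraMap ℚ F a = r a ^ 2 := by rw [map_natCast, h.sq a ha]
      rw [Polynomial.map_sub, Polynomial.map_pow, Polynomial.map_X, Polynomial.map_C, ha2,
        map_pow, map_neg]
      ring
    refine Polynomial.Splits.of_dvd ?_ ?_ (Polynomial.map_dvd _ hdvd) <;> rw [hfactor]
    · exact (Polynomial.Splits.X_sub_C _).mul (Polynomial.Splits.X_sub_C _)
    · exact mul_ne_zero (Polynomial.X_sub_C_ne_zero _) (Polynomial.X_sub_C_ne_zero _)
  exact ⟨⟩

theorem finrank_le [NumberField F] (h : IsMultiquadratic F S r) :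
    Module.finrank ℚ F ≤ 2 ^ S.card := by
  classical
  have := h.isGalois
  let signs : Gal(F/ℚ) → S → Bool := fun g a => g (r a) = r a
  have hsigns : Function.Injective signs := by
    refine fun f g hfg => h.gal_ext fun a ha => ?_
    have hiff : f (r a) = r a ↔ g (r a) = r a := by
      simpa only [signs, decide_eq_decide] using congrFun hfg ⟨a, ha⟩
    rcases h.gal_apply_eq_or_eq_neg f ha with hf | hf
    · rw [hf, hiff.1 hf]
    · rcases h.gal_apply_eq_or_eq_neg g ha with hg | hg
      · rw [hg, hiff.2 hg]
      · rw [hf, hg]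
  rw [← IsGalois.card_aut_eq_finrank]
  simpa using Nat.card_le_card_of_injective signs hsigns

theorem isTotallyReal (h : IsMultiquadratic F S r) : IsTotallyReal F := by
  refine ⟨fun v => ?_⟩
  rw [InfinitePlace.isReal_iff, ComplexEmbedding.isReal_iff]
  have hconj : (ComplexEmbedding.conjugate v.embedding).toRatAlgHom =
      v.embedding.toRatAlgHom := by
    refine h.algHom_ext fun a ha => ?_
    change starRingEnd ℂ (v.embedding (r a)) = v.embedding (r a)
    have hsqrt : ((√a : ℝ) : ℂ) ^ 2 = a := by
      rw [← Complex.ofReal_pow, Real.sq_sqrt a.cast_nonneg, Complex.ofReal_natCast]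
    have hsq : v.embedding (r a) ^ 2 = ((√a : ℝ) : ℂ) ^ 2 := by
      rw [← map_pow, h.sq a ha, map_natCast, hsqrt]
    rcases sq_eq_sq_iff_eq_or_eq_neg.1 hsq with hv | hv <;> simp [hv]
  ext x
  exact DFunLike.congr_fun hconj x

end IsMultiquadratic

/-! ### Squares modulo a prime -/

theorem not_isSquare_mul_sq {M : Type*} [CommGroupWithZero M] {a w : M} (ha : ¬IsSquare a)
    (hw : w ≠ 0) : ¬IsSquare (a * w ^ 2) := by
  rintro ⟨t, ht⟩
  refine ha ⟨t / w, ?_⟩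
  rw [div_mul_div_comm, ← ht, ← pow_two, mul_div_cancel_right₀ _ (pow_ne_zero 2 hw)]

theorem valuation_mul_sq_lt {K Γ : Type*} [Field K] [LinearOrderedCommGroupWithZero Γ]
    {V : Valuation K Γ} {l : K} (hl : ¬IsSquare (V l)) {a b y : K} (hy : y ≠ 0)
    (h : V (y ^ 2) = V (a ^ 2 - l * b ^ 2)) : V (l * b ^ 2) < V (a ^ 2) := by
  have hne : ∀ x : K, b ≠ 0 → V (x ^ 2) ≠ V (l * b ^ 2) := by
    intro x hb hx
    rw [map_mul, map_pow, map_pow] at hx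
    exact not_isSquare_mul_sq hl (V.ne_zero_iff.2 hb) (hx ▸ IsSquare.sq _)
  rcases eq_or_ne b 0 with rfl | hb
  · rw [zero_pow two_ne_zero, mul_zero, sub_zero] at h
    rw [zero_pow two_ne_zero, mul_zero, map_zero, ← h, zero_lt_iff]
    exact V.ne_zero_iff.2 (pow_ne_zero 2 hy)
  · refine (hne a hb).symm.lt_of_le (not_lt.1 fun hlt => hne y hb ?_)
    rw [h, Valuation.map_sub_eq_of_lt_right _ hlt]

theorem isSquare_mk_of_mul_sq_sub_sq_mem {R : Type*} [CommRing R] [IsDedekindDomain R]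
    (v : HeightOneSpectrum R) {u m c : R} (hm : m ∉ v.asIdeal)
    (h : u * m ^ 2 - c ^ 2 ∈ v.asIdeal) : IsSquare (Ideal.Quotient.mk v.asIdeal u) := by
  have := v.isMaximal
  let := Ideal.Quotient.field v.asIdeal
  by_contra hu
  have hm0 : Ideal.Quotient.mk v.asIdeal m ≠ 0 := mt Ideal.Quotient.eq_zero_iff_mem.1 hm
  refine not_isSquare_mul_sq hu hm0 ⟨Ideal.Quotient.mk v.asIdeal c, ?_⟩
  rw [← map_pow, ← map_mul, ← map_mul, Ideal.Quotient.eq, ← pow_two]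
  exact h

theorem isSquare_mk_of_mul_sq_eq_sub {R K : Type*} [CommRing R] [IsDedekindDomain R] [Field K]
    [Algebra R K] [IsFractionRing R K] (v : HeightOneSpectrum R) {l : K}
    (hl : ¬IsSquare (v.valuation K l)) {u : R} (hu : u ∉ v.asIdeal) {a b y : K} (hy : y ≠ 0)
    (h : algebraMap R K u * y ^ 2 = a ^ 2 - l * b ^ 2) :
    IsSquare (Ideal.Quotient.mk v.asIdeal u) := by
  have hone {x : R} (hx : x ∉ v.asIdeal) : v.valuation K (algebraMap R K x) = 1 :=
    (v.valuation_eq_one_iff_notMem).2 hx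
  have hval : v.valuation K (y ^ 2) = v.valuation K (a ^ 2 - l * b ^ 2) := by
    rw [← h, map_mul, hone hu, one_mul]
  have hlt := valuation_mul_sq_lt hl hy hval
  have hya : v.valuation K (a ^ 2) = v.valuation K (y ^ 2) := by
    rw [hval, Valuation.map_sub_eq_of_lt_left _ hlt]
  have hle : v.valuation K (a / y) ≤ 1 := by
    rw [map_pow, map_pow, pow_left_inj₀ zero_le zero_le two_ne_zero] at hya
    rw [map_div₀, hya, div_self ((Valuation.ne_zero_iff _).2 hy)]
  obtain ⟨c, ⟨m, hm⟩, hcm⟩ := v.exists_primeCompl_mul_eq_of_integer (a / y) hle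
  have heq : algebraMap R K (u * m ^ 2 - c ^ 2) =
      -(l * b ^ 2) * algebraMap R K m ^ 2 / y ^ 2 := by
    rw [map_sub, map_mul, map_pow, map_pow, ← hcm]
    field_simp
    linear_combination algebraMap R K m ^ 2 * h
  refine isSquare_mk_of_mul_sq_sub_sq_mem v hm (c := c)
    ((v.valuation_lt_one_iff_mem (K := K) _).1 ?_)
  change v.valuation K (algebraMap R K _) < 1
  rw [heq, map_div₀, map_mul, Valuation.map_neg, map_pow _ _ 2, hone hm, one_pow, mul_one, ← hya]
  exact (div_lt_one₀ (zero_le.trans_lt hlt)).2 hlt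

section Frobenius

theorem eq_of_sq_eq_sq_of_sub_mem {R : Type*} [CommRing R] [IsDomain R] {I : Ideal R} {a b : R}
    (h : a ^ 2 = b ^ 2) (hb : 2 * b ∉ I) (hab : a - b ∈ I) : a = b := by
  refine (sq_eq_sq_iff_eq_or_eq_neg.1 h).resolve_right fun hneg => hb ?_
  rw [← neg_mem_iff]
  convert hab using 1
  rw [hneg]
  ring

theorem prime_intCast (ℓ : ℕ) [hℓ : Fact ℓ.Prime] : Prime (ℓ : ℤ) :=
  Nat.prime_iff_prime_int.1 hℓ.out

variable {F : Type*} [Field F] {ℓ : ℕ} {v : HeightOneSpectrum (𝓞 F)}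

variable (F ℓ) in
/-- The primes of `F` above the rational prime `ℓ`. -/
def primesAbove : Set (HeightOneSpectrum (𝓞 F)) :=
  {v | (ℓ : 𝓞 F) ∈ v.asIdeal}

variable [Fact ℓ.Prime]

theorem liesOver_of_mem_primesAbove (hv : v ∈ primesAbove F ℓ) :
    v.asIdeal.LiesOver (Ideal.span {(ℓ : ℤ)}) :=
  (Ideal.liesOver_span_iff v.isPrime.ne_top (prime_intCast ℓ)).2
    (by simpa using (show (ℓ : 𝓞 F) ∈ v.asIdeal from hv))

theorem charP_of_mem_primesAbove (hv : v ∈ primesAbove F ℓ) : CharP (𝓞 F ⧸ v.asIdeal) ℓ := by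
  rw [CharP.charP_iff_prime_eq_zero Fact.out, ← map_natCast (Ideal.Quotient.mk v.asIdeal)]
  exact Ideal.Quotient.eq_zero_iff_mem.2 hv

theorem natCast_pow_div_two (hv : v ∈ primesAbove F ℓ) (c : ℕ) :
    (c : 𝓞 F ⧸ v.asIdeal) ^ (ℓ / 2) = (legendreSym ℓ c : 𝓞 F ⧸ v.asIdeal) := by
  have := charP_of_mem_primesAbove hv
  simpa using (congrArg (ZMod.castHom dvd_rfl (𝓞 F ⧸ v.asIdeal)) (legendreSym.eq_pow ℓ c)).symm

theorem neg_one_ne_one_quotient (hℓ : ℓ ≠ 2) (hv : v ∈ primesAbove F ℓ) :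
    (-1 : 𝓞 F ⧸ v.asIdeal) ≠ 1 := by
  have := charP_of_mem_primesAbove hv
  exact Ring.neg_one_ne_one_of_char_ne_two (by rwa [ringChar.eq (𝓞 F ⧸ v.asIdeal) ℓ])

theorem two_mul_sqrt_notMem (hℓ : ℓ ≠ 2) (hv : v ∈ primesAbove F ℓ) {x : 𝓞 F} {c : ℕ}
    (hx : x ^ 2 = c) (hc : ¬ℓ ∣ c) : 2 * x ∉ v.asIdeal := by
  have := charP_of_mem_primesAbove hv
  have natCast_notMem {n : ℕ} (hn : ¬ℓ ∣ n) : (n : 𝓞 F) ∉ v.asIdeal := by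
    rwa [← Ideal.Quotient.eq_zero_iff_mem, map_natCast, CharP.cast_eq_zero_iff _ ℓ]
  intro hmem
  rcases v.isPrime.mem_or_mem hmem with h2 | hxv
  · refine natCast_notMem (n := 2) ?_ (by exact_mod_cast h2)
    rwa [Nat.prime_dvd_prime_iff_eq Fact.out Nat.prime_two]
  · exact natCast_notMem hc (hx ▸ Ideal.pow_mem_of_mem _ hxv 2 two_pos)

variable [NumberField F]

variable (F ℓ) in
theorem primesAbove_nonempty : (primesAbove F ℓ).Nonempty := by
  have hprime : (Ideal.span {(ℓ : ℤ)}).IsPrime :=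
    (Ideal.span_singleton_prime (prime_intCast ℓ).ne_zero).2 (prime_intCast ℓ)
  have hne : Ideal.span {(ℓ : ℤ)} ≠ ⊥ := by simpa using (prime_intCast ℓ).ne_zero
  obtain ⟨P, hP, hPℓ⟩ := (inferInstance : Nonempty ((Ideal.span {(ℓ : ℤ)}).primesOver (𝓞 F)))
  refine ⟨⟨P, hP, Ideal.ne_bot_of_liesOver_of_ne_bot hne P⟩, ?_⟩
  change (ℓ : 𝓞 F) ∈ P
  simpa using (Ideal.liesOver_span_iff hP.ne_top (prime_intCast ℓ)).1 hPℓ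

theorem finite_primesAbove_and_ncard_mul_le [IsGalois ℚ F] {m : ℕ}
    (h : ∀ v ∈ primesAbove F ℓ, m ≤ Nat.card (MulAction.stabilizer Gal(F/ℚ) v.asIdeal)) :
    (primesAbove F ℓ).Finite ∧ (primesAbove F ℓ).ncard * m ≤ Module.finrank ℚ F := by
  obtain ⟨v, hv⟩ := primesAbove_nonempty F ℓ
  have := liesOver_of_mem_primesAbove hv
  have hinj : Set.InjOn HeightOneSpectrum.asIdeal (primesAbove F ℓ) :=
    fun _ _ _ _ => HeightOneSpectrum.ext
  have horbit : HeightOneSpectrum.asIdeal '' primesAbove F ℓ ⊆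
      MulAction.orbit Gal(F/ℚ) v.asIdeal := by
    rintro _ ⟨w, hw, rfl⟩
    rw [Algebra.IsInvariant.orbit_eq_primesOver ℤ (𝓞 F) Gal(F/ℚ) (Ideal.span {(ℓ : ℤ)})]
    exact ⟨w.isPrime, liesOver_of_mem_primesAbove hw⟩
  have hfin : (MulAction.orbit Gal(F/ℚ) v.asIdeal).Finite := Set.finite_range _
  refine ⟨.of_finite_image (hfin.subset horbit) hinj, ?_⟩
  rw [← hinj.ncard_image, ← IsGalois.card_aut_eq_finrank,
    ← Nat.card_congr (MulAction.orbitProdStabilizerEquivGroup Gal(F/ℚ) v.asIdeal), Nat.card_prod,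
    Nat.card_coe_set_eq]
  exact Nat.mul_le_mul (Set.ncard_le_ncard horbit hfin) (h v hv)

variable (v) in
theorem exists_isArithFrobAt [IsGalois ℚ F] : ∃ g : Gal(F/ℚ), IsArithFrobAt ℤ g v.asIdeal :=
  have : Finite (𝓞 F ⧸ v.asIdeal) := Ideal.finiteQuotientOfFreeOfNeBot _ v.ne_bot
  IsArithFrobAt.exists_of_isInvariant ℤ Gal(F/ℚ) v.asIdeal

variable {g : Gal(F/ℚ)}

theorem mk_smul_eq_pow (hv : v ∈ primesAbove F ℓ) (hg : IsArithFrobAt ℤ g v.asIdeal) (x : 𝓞 F) :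
    Ideal.Quotient.mk v.asIdeal (g • x) = Ideal.Quotient.mk v.asIdeal x ^ ℓ := by
  have hcard : Nat.card (ℤ ⧸ v.asIdeal.under ℤ) = ℓ := by
    rw [← (liesOver_of_mem_primesAbove hv).over,
      Nat.card_congr (Int.quotientSpanNatEquivZMod ℓ).toEquiv, Nat.card_zmod]
  exact (hg.mk_apply x).trans (congrArg _ hcard)

theorem mk_pow_sub_one_eq_one (hv : v ∈ primesAbove F ℓ) (hg : IsArithFrobAt ℤ g v.asIdeal)
    {y : 𝓞 F} (hgy : g • y = y) (hy : y ∉ v.asIdeal) :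
    Ideal.Quotient.mk v.asIdeal y ^ (ℓ - 1) = 1 := by
  refine mul_left_cancel₀ (mt Ideal.Quotient.eq_zero_iff_mem.1 hy) ?_
  rw [mul_pow_sub_one (Fact.out : ℓ.Prime).ne_zero, ← mk_smul_eq_pow hv hg, hgy, mul_one]

theorem two_mul_div_two (hℓ : ℓ ≠ 2) : 2 * (ℓ / 2) = ℓ - 1 := by
  have := (Fact.out : ℓ.Prime).eq_two_or_odd
  omega

theorem gal_smul_sq {x : 𝓞 F} {c : ℕ} (hx : x ^ 2 = c) (σ : Gal(F/ℚ)) : (σ • x) ^ 2 = x ^ 2 := by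
  rw [← smul_pow', hx]
  exact map_natCast (MulSemiringAction.toRingHom Gal(F/ℚ) (𝓞 F) σ) c

theorem isArithFrobAt_smul_sqrt (hℓ : ℓ ≠ 2) (hv : v ∈ primesAbove F ℓ)
    (hg : IsArithFrobAt ℤ g v.asIdeal) {x : 𝓞 F} {c : ℕ} (hx : x ^ 2 = c) (hc : ¬ℓ ∣ c) :
    g • x = legendreSym ℓ c * x := by
  have hc' : ((c : ℤ) : ZMod ℓ) ≠ 0 := by
    rwa [Int.cast_natCast, Ne, ZMod.natCast_eq_zero_iff]
  have hsign : (legendreSym ℓ c : 𝓞 F) ^ 2 = 1 := by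
    exact_mod_cast congrArg (Int.cast (R := 𝓞 F)) (legendreSym.sq_one ℓ hc')
  have hsq : (legendreSym ℓ c * x) ^ 2 = c := by rw [mul_pow, hsign, one_mul, hx]
  refine eq_of_sq_eq_sq_of_sub_mem (by rw [gal_smul_sq hx, hsq, hx])
    (two_mul_sqrt_notMem hℓ hv hsq hc) (Ideal.Quotient.eq.1 ?_)
  have hℓ1 : ℓ = 2 * (ℓ / 2) + 1 := by
    rw [two_mul_div_two hℓ, Nat.sub_add_cancel (Fact.out : ℓ.Prime).one_le]
  rw [mk_smul_eq_pow hv hg, map_mul, map_intCast, ← natCast_pow_div_two hv, ← map_natCast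
    (Ideal.Quotient.mk v.asIdeal), ← hx, map_pow, ← pow_mul, ← pow_succ, ← hℓ1]

theorem mk_mul_smul_pow_eq_one (hℓ : ℓ ≠ 2) (hv : v ∈ primesAbove F ℓ)
    (hg : IsArithFrobAt ℤ g v.asIdeal) (hgg : g * g = 1) {u : 𝓞 F} (hu : u ∉ v.asIdeal)
    (hsq : IsSquare (Ideal.Quotient.mk v.asIdeal u)) :
    Ideal.Quotient.mk v.asIdeal (u * g • u) ^ (ℓ / 2) = 1 := by
  obtain ⟨t, ht⟩ := hsq
  obtain ⟨c, rfl⟩ := Ideal.Quotient.mk_surjective t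
  have hc : c ∉ v.asIdeal := by
    intro hc
    rw [Ideal.Quotient.eq_zero_iff_mem.2 hc, mul_zero, Ideal.Quotient.eq_zero_iff_mem] at ht
    exact hu ht
  have hgc : g • c ∉ v.asIdeal := by
    rw [← Ideal.Quotient.eq_zero_iff_mem, mk_smul_eq_pow hv hg]
    exact pow_ne_zero _ (mt Ideal.Quotient.eq_zero_iff_mem.1 hc)
  have hfix : g • (c * g • c) = c * g • c := by
    rw [smul_mul', smul_smul, hgg, one_smul, mul_comm]
  have hnorm : Ideal.Quotient.mk v.asIdeal (u * g • u) =
      Ideal.Quotient.mk v.asIdeal (c * g • c) ^ 2 := by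
    simp only [map_mul, mk_smul_eq_pow hv hg, ht]
    ring
  rw [hnorm, ← pow_mul, two_mul_div_two hℓ]
  exact mk_pow_sub_one_eq_one hv hg hfix fun hmem => (v.isPrime.mem_or_mem hmem).elim hc hgc

end Frobenius

section LocalConditions

theorem unit_notMem {F : Type*} [Field F] (v : HeightOneSpectrum (𝓞 F)) (u : (𝓞 F)ˣ) :
    (u : 𝓞 F) ∉ v.asIdeal :=
  fun hu => v.isPrime.ne_top (Ideal.eq_top_of_isUnit_mem _ hu u.isUnit)

theorem smul_unit_notMem {F : Type*} [Field F] [NumberField F] (v : HeightOneSpectrum (𝓞 F))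
    (u : (𝓞 F)ˣ) (τ : Gal(F/ℚ)) : τ • (u : 𝓞 F) ∉ v.asIdeal :=
  unit_notMem v (Units.map (MulSemiringAction.toRingHom Gal(F/ℚ) (𝓞 F) τ : 𝓞 F →* 𝓞 F) u)

variable {F K : Type*} [Field F] [NumberField F] [Field K] [NumberField K] [Algebra F K]
  {S : Finset ℕ} {r : ℕ → F} {ℓ : ℕ} {v : HeightOneSpectrum (𝓞 F)}

theorem IsSqrtExtension.isSquare_mk_smul_of_mem_normUnits {δ : K}
    (h : IsSqrtExtension F K (ℓ : F) δ) (hl : ¬IsSquare (v.valuation F (ℓ : F))) {u : (𝓞 F)ˣ}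
    (hu : u ∈ normUnits F K) (τ : Gal(F/ℚ)) :
    IsSquare (Ideal.Quotient.mk v.asIdeal (τ • (u : 𝓞 F))) := by
  obtain ⟨a, b, y, hy, hab⟩ := h.exists_norm_form hu
  have hτab := congrArg τ hab
  simp only [map_mul, map_sub, map_pow, map_natCast] at hτab
  exact isSquare_mk_of_mul_sq_eq_sub v hl (smul_unit_notMem v u τ) (by simpa using hy) hτab

theorem IsSqrtExtension.isSquare_mk_of_mem_normUnits {δ : K}
    (h : IsSqrtExtension F K (ℓ : F) δ) (hl : ¬IsSquare (v.valuation F (ℓ : F))) {u : (𝓞 F)ˣ}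
    (hu : u ∈ normUnits F K) : IsSquare (Ideal.Quotient.mk v.asIdeal (u : 𝓞 F)) := by
  simpa using h.isSquare_mk_smul_of_mem_normUnits hl hu 1

namespace IsMultiquadratic

variable [Fact ℓ.Prime]

theorem exists_sq_eq (hM : IsMultiquadratic F S r) {a : ℕ} (ha : a ∈ S) :
    ∃ x : 𝓞 F, (x : F) = r a ∧ x ^ 2 = a :=
  exists_ringOfIntegers_sq_eq (by simpa using hM.sq a ha)

theorem inertia_eq_bot (hM : IsMultiquadratic F S r) (hℓ : ℓ ≠ 2) (hS : ∀ a ∈ S, ¬ℓ ∣ a)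
    (hv : v ∈ primesAbove F ℓ) : v.asIdeal.inertia Gal(F/ℚ) = ⊥ := by
  rw [eq_bot_iff]
  refine fun g hg => Subgroup.mem_bot.2 (hM.gal_ext fun a ha => ?_)
  obtain ⟨x, hxr, hx⟩ := hM.exists_sq_eq ha
  have hgx : g • x = x := eq_of_sq_eq_sq_of_sub_mem (gal_smul_sq hx g)
    (two_mul_sqrt_notMem hℓ hv hx (hS a ha)) (hg x)
  rw [← hxr]
  exact congrArg (algebraMap (𝓞 F) F) hgx

theorem valuation_natCast (hM : IsMultiquadratic F S r) (hℓ : ℓ ≠ 2) (hS : ∀ a ∈ S, ¬ℓ ∣ a)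
    (hv : v ∈ primesAbove F ℓ) : v.valuation F (ℓ : F) = WithZero.exp (-1 : ℤ) := by
  have := hM.isGalois
  have hprime := prime_intCast ℓ
  let w : HeightOneSpectrum ℤ :=
    ⟨Ideal.span {(ℓ : ℤ)}, (Ideal.span_singleton_prime hprime.ne_zero).2 hprime,
      by simpa using hprime.ne_zero⟩
  have : v.asIdeal.LiesOver w.asIdeal := liesOver_of_mem_primesAbove hv
  have hval := HeightOneSpectrum.valuation_liesOver F w v (ℓ : ℚ)
  rw [ramificationIdx'_eq_one_of_inertia_eq_bot Gal(F/ℚ) w.ne_bot (hM.inertia_eq_bot hℓ hS hv),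
    pow_one, map_natCast (algebraMap ℚ F)] at hval
  rw [← hval, ← w.intValuation_singleton hprime.ne_zero rfl, ← w.valuation_of_algebraMap (K := ℚ)]
  simp

theorem not_isSquare_valuation_natCast (hM : IsMultiquadratic F S r) (hℓ : ℓ ≠ 2)
    (hS : ∀ a ∈ S, ¬ℓ ∣ a) (hv : v ∈ primesAbove F ℓ) : ¬IsSquare (v.valuation F (ℓ : F)) := by
  rw [hM.valuation_natCast hℓ hS hv, isSquare_exp_iff]
  decide

variable (ℓ) in
theorem finite_primesAbove_and_ncard_le (hM : IsMultiquadratic F S r) :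
    (primesAbove F ℓ).Finite ∧ (primesAbove F ℓ).ncard ≤ 2 ^ S.card := by
  have := hM.isGalois
  obtain ⟨hfin, hcard⟩ := finite_primesAbove_and_ncard_mul_le (F := F) (ℓ := ℓ) (m := 1)
    fun _ _ => Nat.card_pos
  exact ⟨hfin, (mul_one _).ge.trans (hcard.trans hM.finrank_le)⟩

theorem finite_primesAbove_and_ncard_mul_two_le (hM : IsMultiquadratic F S r) (h2 : 2 ∈ S)
    (hℓ : ℓ ≠ 2) (hleg : legendreSym ℓ 2 = -1) :
    (primesAbove F ℓ).Finite ∧ (primesAbove F ℓ).ncard * 2 ≤ 2 ^ S.card := by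
  have := hM.isGalois
  obtain ⟨x, -, hx⟩ := hM.exists_sq_eq h2
  have hstab (v) (hv : v ∈ primesAbove F ℓ) :
      2 ≤ Nat.card (MulAction.stabilizer Gal(F/ℚ) v.asIdeal) := by
    obtain ⟨g, hg⟩ := exists_isArithFrobAt v
    have hgx := isArithFrobAt_smul_sqrt hℓ hv hg hx
      (by rwa [Nat.prime_dvd_prime_iff_eq Fact.out Nat.prime_two])
    have hg1 : g ≠ 1 := by
      rintro rfl
      have hx0 : x = 0 := by
        rw [one_smul, Nat.cast_ofNat, hleg] at hgx
        exact self_eq_neg.1 (by simpa using hgx)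
      simp [hx0] at hx
    have : Nontrivial (MulAction.stabilizer Gal(F/ℚ) v.asIdeal) :=
      ⟨⟨g, hg.mem_stabilizer⟩, 1, fun h => hg1 (congrArg Subtype.val h)⟩
    exact Finite.one_lt_card
  obtain ⟨hfin, hcard⟩ := finite_primesAbove_and_ncard_mul_le hstab
  exact ⟨hfin, hcard.trans hM.finrank_le⟩

end IsMultiquadratic

end LocalConditions

/-! ### Adjoining one square root -/

section OddClassNumber

theorem exists_unit_mul_eq_of_unit_mul_sq_eq_sq {R : Type*} [CommRing R] [IsDomain R]
    [IsIntegrallyClosed R] {u : Rˣ} {a b : R} (hb : b ≠ 0) (h : u * b ^ 2 = a ^ 2) :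
    ∃ z : Rˣ, z * b = a := by
  obtain ⟨z, rfl⟩ := (IsIntegrallyClosed.pow_dvd_pow_iff two_ne_zero).1 (Dvd.intro_left _ h)
  have hz : z ^ 2 = u := mul_right_cancel₀ (pow_ne_zero 2 hb) (by rw [h]; ring)
  have hunit : IsUnit z := (isUnit_pow_iff two_ne_zero).1 (hz ▸ u.isUnit)
  exact ⟨hunit.unit, mul_comm _ _⟩

theorem exists_ringOfIntegers_unit_mul_sq_eq {K : Type*} [Field K] {u : (𝓞 K)ˣ} {w : K} {a : 𝓞 K}
    (h : algebraMap (𝓞 K) K u * w ^ 2 = algebraMap (𝓞 K) K a) :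
    ∃ y : 𝓞 K, (y : K) = w ∧ u * y ^ 2 = a := by
  have hw : w ^ 2 = algebraMap (𝓞 K) K (((u⁻¹ : (𝓞 K)ˣ) : 𝓞 K) * a) := by
    rw [map_mul, ← h, ← mul_assoc, ← map_mul, Units.inv_mul, map_one, one_mul]
  obtain ⟨y, hy, hy2⟩ := exists_ringOfIntegers_sq_eq hw
  exact ⟨y, hy, by rw [hy2, Units.mul_inv_cancel_left]⟩

variable {F K : Type*} [Field F] [NumberField F] [Field K] [NumberField K] [Algebra F K]

namespace IsMultiquadratic

variable {S : Finset ℕ} {r : ℕ → F}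

theorem odd_card_classGroup_of_empty (hM : IsMultiquadratic F ∅ r) :
    Odd (Nat.card (ClassGroup (𝓞 F))) := by
  have hsurj : Function.Surjective (algebraMap ℚ F) := fun x => by
    have hx : x ∈ IntermediateField.adjoin ℚ (r '' (∅ : Finset ℕ)) :=
      hM.adjoin_eq_top ▸ IntermediateField.mem_top
    simpa [IntermediateField.mem_bot] using hx
  let e : 𝓞 ℚ ≃+* 𝓞 F := RingOfIntegers.mapRingEquiv
    (RingEquiv.ofBijective _ ⟨(algebraMap ℚ F).injective, hsurj⟩)
  have : IsPrincipalIdealRing (𝓞 ℚ) :=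
    .of_surjective Rat.ringOfIntegersEquiv.symm.toRingHom Rat.ringOfIntegersEquiv.symm.surjective
  have : IsPrincipalIdealRing (𝓞 F) := .of_surjective e.toRingHom e.surjective
  rw [Nat.card_eq_fintype_card, card_classGroup_eq_one_iff.2 this]
  exact odd_one

end IsMultiquadratic

theorem span_two_eq_sq {R : Type*} [CommRing R] {x : R} {s : ℕ} (hx : x ^ 2 = s)
    (hs4 : s % 4 = 3) : Ideal.span {(2 : R)} = Ideal.span {2, 1 + x} ^ 2 := by
  obtain ⟨k, rfl⟩ : ∃ k, s = 4 * k + 3 := ⟨s / 4, by omega⟩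
  push_cast at hx
  rw [pow_two, Ideal.span_pair_mul_span_pair]
  apply le_antisymm
  · rw [Ideal.span_singleton_le_iff_mem]
    set J := Ideal.span ({2 * 2, 2 * (1 + x), (1 + x) * 2, (1 + x) * (1 + x)} : Set R)
    have h1 : 2 * 2 ∈ J := Ideal.subset_span (by simp)
    have h2 : 2 * (1 + x) ∈ J := Ideal.subset_span (by simp)
    have h3 : (1 + x) * (1 + x) ∈ J := Ideal.subset_span (by simp)
    have h2eq : (2 : R) = -k * (2 * 2) - 2 * (1 + x) + (1 + x) * (1 + x) := by
      linear_combination -hx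
    rw [h2eq]
    exact J.add_mem (J.sub_mem (J.mul_mem_left _ h1) h2) h3
  · simp only [Ideal.span_le, Set.insert_subset_iff, Set.singleton_subset_iff, SetLike.mem_coe,
      Ideal.mem_span_singleton]
    exact ⟨⟨2, rfl⟩, ⟨_, rfl⟩, ⟨1 + x, mul_comm _ _⟩, 2 * k + 2 + x, by linear_combination hx⟩

theorem IsMultiquadratic.ncard_primesAbove_two_le_one {s : ℕ} {r : ℕ → K}
    (hM : IsMultiquadratic K {s} r) (hs4 : s % 4 = 3) : (primesAbove K 2).ncard ≤ 1 := by
  obtain ⟨x, -, hx⟩ := hM.exists_sq_eq (Finset.mem_singleton_self s)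
  have hsq := span_two_eq_sq hx hs4
  set I := Ideal.span {2, 1 + x}
  have hnorm : Ideal.absNorm I ^ 2 = 2 ^ Module.finrank ℚ K := by
    rw [← map_pow, ← hsq, Ideal.absNorm_span_singleton, ← map_ofNat (algebraMap ℤ (𝓞 K)),
      Algebra.norm_algebraMap, RingOfIntegers.rank, Int.natAbs_pow]
    rfl
  have hrank : Module.finrank ℚ K ≤ 2 := by simpa using hM.finrank_le
  have hI2 : Ideal.absNorm I = 2 := by
    have hlt : 1 < Ideal.absNorm I ^ 2 :=
      hnorm ▸ Nat.one_lt_two_pow (Module.finrank_pos (R := ℚ) (M := K)).ne'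
    have hle : Ideal.absNorm I ^ 2 ≤ 2 ^ 2 := hnorm ▸ Nat.pow_le_pow_right two_pos hrank
    have := lt_of_pow_lt_pow_left₀ 2 (Nat.zero_le _) ((one_pow 2).trans_lt hlt)
    have := le_of_pow_le_pow_left₀ two_ne_zero (Nat.zero_le _) hle
    omega
  have hprime : I.IsPrime := Ideal.isPrime_of_irreducible_absNorm (hI2 ▸ Nat.prime_two)
  have hmax : I.IsMaximal := hprime.isMaximal fun h => by simp [h] at hI2
  have heq (v : HeightOneSpectrum (𝓞 K)) (hv : v ∈ primesAbove K 2) : I = v.asIdeal := by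
    refine hmax.eq_of_le v.isPrime.ne_top (v.isPrime.le_of_pow_le (n := 2) ?_)
    rw [← hsq, Ideal.span_singleton_le_iff_mem]
    exact_mod_cast hv
  rw [Set.ncard_le_one (hM.finite_primesAbove_and_ncard_le 2).1]
  exact fun v hv w hw => HeightOneSpectrum.ext ((heq v hv).symm.trans (heq w hw))

theorem IsMultiquadratic.exists_unit_mul_sq_eq_two {s : ℕ} {r : ℕ → K}
    (hM : IsMultiquadratic K {s} r) (hs4 : s % 4 = 3)
    (hK : Odd (Nat.card (ClassGroup (𝓞 K)))) :
    ∃ (u : (𝓞 K)ˣ) (y : 𝓞 K), u * y ^ 2 = 2 := by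
  obtain ⟨x, -, hx⟩ := hM.exists_sq_eq (Finset.mem_singleton_self s)
  have h2 : Units.mk0 (2 : K) two_ne_zero ∈ virtualUnits K :=
    mem_virtualUnits_of_span_eq_sq (map_ofNat _ 2) (span_two_eq_sq hx hs4)
  rw [virtualUnits, twoSelmer_empty_eq_of_odd hK, Subgroup.mem_sup] at h2
  obtain ⟨z, hz, _, ⟨u, rfl⟩, hzu⟩ := h2
  obtain ⟨y, rfl⟩ := (isSquare_iff_exists_sq z).1 (Subgroup.mem_square.1 hz)
  have hy : (y : K) ^ 2 * algebraMap (𝓞 K) K u = 2 := congrArg Units.val hzu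
  obtain ⟨Y, -, hY⟩ := exists_ringOfIntegers_unit_mul_sq_eq (u := u) (w := y) (a := 2)
    (by rw [mul_comm, hy, map_ofNat])
  exact ⟨u, Y, hY⟩

end OddClassNumber

section AdjoinSqrt

variable {F K : Type*} [Field F] [NumberField F] [Field K] [Algebra F K]
  {r : ℕ → F} {δ : K}

namespace IsSqrtExtension

theorem hasTrivialInertia_of_notMem_primesAbove {n : ℕ} (h : IsSqrtExtension F K (n : F) δ)
    {v : HeightOneSpectrum (𝓞 F)} (h2 : v ∉ primesAbove F 2) (hn : v ∉ primesAbove F n) :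
    HasTrivialInertia K v :=
  hasTrivialInertia_of_notMem (d := (n : 𝓞 F)) (by simpa using h)
    (fun hv => h2 (by simpa [primesAbove] using hv)) hn

theorem hasTrivialInertia_of_mod_four_eq_one {n : ℕ} (h : IsSqrtExtension F K (n : F) δ)
    (hn4 : n % 4 = 1) {v : HeightOneSpectrum (𝓞 F)} (hn : v ∉ primesAbove F n) :
    HasTrivialInertia K v := by
  refine hasTrivialInertia_of_mul_eq (d := (n : 𝓞 F)) (c := 1) (k := (n / 4 : ℕ))
    (by simpa using h) (one_pow 2) ?_ hn (unit_notMem v 1)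
  rw [mul_one]
  exact_mod_cast (by omega : n = 4 * (n / 4) + 1)

theorem hasTrivialInertia_of_sq_eq_mod_four_eq_three {n s : ℕ} (h : IsSqrtExtension F K (n : F) δ)
    (hn4 : n % 4 = 3) {x : 𝓞 F} (hx : x ^ 2 = s) (hs4 : s % 4 = 3) {v : HeightOneSpectrum (𝓞 F)}
    (hn : v ∉ primesAbove F n) : HasTrivialInertia K v := by
  by_cases h2 : v ∈ primesAbove F 2
  · have hns : n * s = 4 * (n * s / 4) + 1 := by
      have : n * s % 4 = 1 := by rw [Nat.mul_mod, hn4, hs4]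
      omega
    refine hasTrivialInertia_of_mul_eq (d := (n : 𝓞 F)) (k := (n * s / 4 : ℕ)) (by simpa using h)
      hx (by exact_mod_cast hns) hn fun hs => unit_notMem v 1 ?_
    have hs' : s = 2 * (s / 2) + 1 := by omega
    rw [hs', Nat.cast_add, Nat.cast_mul, Nat.cast_one] at hs
    exact (v.asIdeal.add_mem_iff_right (v.asIdeal.mul_mem_right _ h2)).1 hs
  · exact h.hasTrivialInertia_of_notMem_primesAbove h2 hn

variable [NumberField K] [IsTotallyReal F] [IsTotallyReal K]

theorem odd_card_classGroup_of_sqrt_two (h : IsSqrtExtension F K (2 : ℕ) δ)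
    (hF : Odd (Nat.card (ClassGroup (𝓞 F)))) (hfin : (primesAbove F 2).Finite)
    (hcard : (primesAbove F 2).ncard ≤ 1) : Odd (Nat.card (ClassGroup (𝓞 K))) :=
  (h.odd_and_normUnits_eq_top hF hfin
    (fun _ hv => h.hasTrivialInertia_of_notMem_primesAbove hv hv) hcard).1

theorem odd_card_and_normUnits_eq_top_of_legendreSym_two {p : ℕ} [Fact p.Prime]
    (h : IsSqrtExtension F K (p : F) δ) (hM : IsMultiquadratic F {2} r) (hp4 : p % 4 = 1)
    (hp2 : legendreSym p 2 = -1) (hF : Odd (Nat.card (ClassGroup (𝓞 F)))) :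
    Odd (Nat.card (ClassGroup (𝓞 K))) ∧ normUnits F K = ⊤ := by
  obtain ⟨hfin, hcard⟩ := hM.finite_primesAbove_and_ncard_mul_two_le
    (Finset.mem_singleton_self 2) (by omega) hp2
  rw [Finset.card_singleton] at hcard
  exact h.odd_and_normUnits_eq_top hF hfin
    (fun _ hv => h.hasTrivialInertia_of_mod_four_eq_one hp4 hv) (by omega)

theorem odd_card_classGroup_of_mod_four_eq_three {s : ℕ} [Fact s.Prime]
    (h : IsSqrtExtension F K (s : F) δ) (hM : IsMultiquadratic F ∅ r) (hs4 : s % 4 = 3)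
    (hF : Odd (Nat.card (ClassGroup (𝓞 F)))) : Odd (Nat.card (ClassGroup (𝓞 K))) := by
  have hs2 : s ≠ 2 := by omega
  have := hM.isGalois
  obtain ⟨hfin_s, hcard_s⟩ := hM.finite_primesAbove_and_ncard_le s
  obtain ⟨hfin_two, hcard_two⟩ := hM.finite_primesAbove_and_ncard_le 2
  rw [Finset.card_empty, pow_zero] at hcard_s hcard_two
  have hcard : (primesAbove F s ∪ primesAbove F 2).ncard ≤ 2 :=
    (Set.ncard_union_le _ _).trans (Nat.add_le_add hcard_s hcard_two)
  have hur (v) (hv : v ∉ primesAbove F s ∪ primesAbove F 2) : HasTrivialInertia K v :=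
    h.hasTrivialInertia_of_notMem_primesAbove (fun h2 => hv (.inr h2)) (fun hs => hv (.inl hs))
  refine h.odd_of_notMem_normUnits hF (hfin_s.union hfin_two) hur hcard (u := -1) fun hu => ?_
  obtain ⟨v, hv⟩ := primesAbove_nonempty F s
  obtain ⟨g, hg⟩ := exists_isArithFrobAt v
  obtain rfl : g = 1 := hM.gal_ext (by simp)
  obtain ⟨t, ht⟩ := h.isSquare_mk_of_mem_normUnits
    (hM.not_isSquare_valuation_natCast hs2 (by simp) hv) hu
  obtain ⟨c, rfl⟩ := Ideal.Quotient.mk_surjective t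
  have hc : c ∉ v.asIdeal := fun hc => unit_notMem v (-1) <| by
    rw [← Ideal.Quotient.eq_zero_iff_mem, ht, Ideal.Quotient.eq_zero_iff_mem.2 hc, mul_zero]
  have hpow := mk_pow_sub_one_eq_one hv hg (one_smul _ c) hc
  have hodd : Odd (s / 2) := Nat.odd_iff.2 (by omega)
  rw [← two_mul_div_two hs2, pow_mul, pow_two, ← ht, Units.val_neg, Units.val_one, map_neg,
    map_one, hodd.neg_one_pow] at hpow
  exact neg_one_ne_one_quotient hs2 hv hpow

end IsSqrtExtension

end AdjoinSqrt

section NonNormUnits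

variable {F K : Type*} [Field F] [NumberField F] [Field K] [NumberField K] [Algebra F K]
  {r : ℕ → F} {δ : K} {S : Finset ℕ} {s p q : ℕ}

theorem not_dvd_of_legendreSym_ne_zero [Fact p.Prime] {a : ℕ} (ha : legendreSym p a ≠ 0) :
    ¬p ∣ a := by
  rwa [Ne, legendreSym.eq_zero_iff, Int.cast_natCast, ZMod.natCast_eq_zero_iff] at ha

theorem not_isSquare_mk_of_mul_eq_neg_two [Fact p.Prime] (hp4 : p % 4 = 1)
    (hp2 : legendreSym p 2 = -1) {v : HeightOneSpectrum (𝓞 F)} (hv : v ∈ primesAbove F p)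
    {g : Gal(F/ℚ)} (hg : IsArithFrobAt ℤ g v.asIdeal) (hgg : g * g = 1) {z : (𝓞 F)ˣ} {Y : 𝓞 F}
    (hgY : g • Y = Y) (hY : Y ∉ v.asIdeal)
    (hzY : z * g • (z : 𝓞 F) * Y ^ 2 = -2) : ¬IsSquare (Ideal.Quotient.mk v.asIdeal z) := by
  intro hz
  have hp : p ≠ 2 := by omega
  have heven : Even (p / 2) := Nat.even_iff.2 (by omega)
  have hpow : (2 : 𝓞 F ⧸ v.asIdeal) ^ (p / 2) = 1 := calc
    (2 : 𝓞 F ⧸ v.asIdeal) ^ (p / 2)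
      = Ideal.Quotient.mk v.asIdeal (z * g • (z : 𝓞 F) * Y ^ 2) ^ (p / 2) := by
        rw [hzY, map_neg, map_ofNat, heven.neg_pow]
    _ = Ideal.Quotient.mk v.asIdeal (z * g • (z : 𝓞 F)) ^ (p / 2) *
          Ideal.Quotient.mk v.asIdeal Y ^ (p - 1) := by
        rw [map_mul, mul_pow, map_pow, ← pow_mul, two_mul_div_two hp]
    _ = 1 := by
        rw [mk_mul_smul_pow_eq_one hp hv hg hgg (unit_notMem v z) hz,
          mk_pow_sub_one_eq_one hv hg hgY hY, mul_one]
  refine neg_one_ne_one_quotient hp hv ?_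
  have hleg := natCast_pow_div_two hv 2
  rwa [Nat.cast_ofNat, hpow, Nat.cast_ofNat, hp2, Int.cast_neg, Int.cast_one, eq_comm] at hleg

namespace IsSqrtExtension

variable [IsTotallyReal F] [IsTotallyReal K]

theorem odd_card_classGroup_of_legendreSym [Fact p.Prime]
    (h : IsSqrtExtension F K (p : F) δ) (hM : IsMultiquadratic F {2, s} r) (hp4 : p % 4 = 1)
    (hp2 : legendreSym p 2 = -1) (hps : legendreSym p s = 1)
    (hF : Odd (Nat.card (ClassGroup (𝓞 F)))) {U : (𝓞 F)ˣ} {Y : 𝓞 F} (hUY : U * Y ^ 2 = 2)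
    (hY : ∀ g : Gal(F/ℚ), g (r s) = r s → g • Y = Y) : Odd (Nat.card (ClassGroup (𝓞 K))) := by
  have := hM.isGalois
  have hp : p ≠ 2 := by omega
  have hp2' : ¬p ∣ 2 := by rwa [Nat.prime_dvd_prime_iff_eq Fact.out Nat.prime_two]
  have hps' : ¬p ∣ s := not_dvd_of_legendreSym_ne_zero (by simp [hps])
  obtain ⟨R, -, hR⟩ := hM.exists_sq_eq (a := 2) (by simp)
  obtain ⟨W, hWr, hW⟩ := hM.exists_sq_eq (a := s) (by simp)
  have hY0 : Y ≠ 0 := by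
    rintro rfl
    simp at hUY
  obtain ⟨z, hzY⟩ := exists_unit_mul_eq_of_unit_mul_sq_eq_sq hY0
    (hUY.trans (by rw [hR, Nat.cast_ofNat] : (2 : 𝓞 F) = R ^ 2))
  obtain ⟨hfin, hcard⟩ := hM.finite_primesAbove_and_ncard_mul_two_le (by simp) hp hp2
  have hpow : 2 ^ ({2, s} : Finset ℕ).card ≤ 2 ^ 2 :=
    Nat.pow_le_pow_right two_pos Finset.card_le_two
  refine h.odd_of_notMem_normUnits hF hfin
    (fun _ hv => h.hasTrivialInertia_of_mod_four_eq_one hp4 hv) (by omega) (u := z)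
    fun hz => ?_
  obtain ⟨v, hv⟩ := primesAbove_nonempty F p
  obtain ⟨g, hg⟩ := exists_isArithFrobAt v
  have hgR : g • R = -R := by simpa [hp2] using isArithFrobAt_smul_sqrt hp hv hg hR hp2'
  have hgW : g • W = W := by simpa [hps] using isArithFrobAt_smul_sqrt hp hv hg hW hps'
  have hgY : g • Y = Y := hY g (by rw [← hWr]; exact congrArg (algebraMap (𝓞 F) F) hgW)
  have hYv : Y ∉ v.asIdeal := fun hYv => two_mul_sqrt_notMem hp hv hR hp2' <| by
    rw [← hzY]
    exact v.asIdeal.mul_mem_left _ (v.asIdeal.mul_mem_left _ hYv)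
  refine not_isSquare_mk_of_mul_eq_neg_two hp4 hp2 hv hg (hM.gal_mul_self g) hgY hYv ?_
    (h.isSquare_mk_of_mem_normUnits (hM.not_isSquare_valuation_natCast hp
      (by simp [hp2', hps']) hv) hz)
  calc z * g • (z : 𝓞 F) * Y ^ 2 = (z * Y) * g • (z * Y) := by rw [smul_mul', hgY]; ring
    _ = -R ^ 2 := by rw [hzY, hgR]; ring
    _ = -2 := by rw [hR, Nat.cast_ofNat]

end IsSqrtExtension

theorem not_isSquare_mk_one_add_sqrt_two [Fact q.Prime] (hM : IsMultiquadratic F S r)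
    (hq4 : q % 4 = 3) (hq2 : legendreSym q 2 = -1) {v : HeightOneSpectrum (𝓞 F)}
    (hv : v ∈ primesAbove F q) {R : 𝓞 F} (hR : R ^ 2 = (2 : ℕ)) :
    ¬IsSquare (Ideal.Quotient.mk v.asIdeal (1 + R)) := by
  intro hsq
  have := hM.isGalois
  have hq : q ≠ 2 := by omega
  have hodd : Odd (q / 2) := Nat.odd_iff.2 (by omega)
  obtain ⟨g, hg⟩ := exists_isArithFrobAt v
  have hgR : g • R = -R := by
    simpa [hq2] using isArithFrobAt_smul_sqrt hq hv hg hR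
      (by rwa [Nat.prime_dvd_prime_iff_eq Fact.out Nat.prime_two])
  have hnorm : (1 + R) * g • (1 + R) = -1 := by
    rw [smul_add, smul_one, hgR]
    linear_combination -hR + (Nat.cast_ofNat : ((2 : ℕ) : 𝓞 F) = 2)
  have hmem : 1 + R ∉ v.asIdeal := fun hmem =>
    unit_notMem v (-1) (by simpa [← hnorm] using v.asIdeal.mul_mem_right (g • (1 + R)) hmem)
  have hpow := mk_mul_smul_pow_eq_one hq hv hg (hM.gal_mul_self g) hmem hsq
  rw [hnorm, map_neg, map_one, hodd.neg_one_pow] at hpow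
  exact neg_one_ne_one_quotient hq hv hpow

namespace IsSqrtExtension

theorem notMem_normUnits_of_mul_smul_eq (h : IsSqrtExtension F K (q : F) δ)
    {v : HeightOneSpectrum (𝓞 F)} (hl : ¬IsSquare (v.valuation F (q : F))) {u η : (𝓞 F)ˣ}
    (hu : ¬IsSquare (Ideal.Quotient.mk v.asIdeal (u : 𝓞 F))) {τ : Gal(F/ℚ)} {w : 𝓞 F}
    (hη : η * τ • (η : 𝓞 F) = u * w ^ 2) : η ∉ normUnits F K := by
  intro hmem
  have := v.isMaximal
  let := Ideal.Quotient.field v.asIdeal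
  have hw : w ∉ v.asIdeal := fun hw => by
    have hmul : (η : 𝓞 F) * τ • (η : 𝓞 F) ∈ v.asIdeal :=
      hη ▸ v.asIdeal.mul_mem_left _ (v.asIdeal.pow_mem_of_mem hw 2 two_pos)
    exact (v.isPrime.mem_or_mem hmul).elim (unit_notMem v η) (smul_unit_notMem v η τ)
  have hsq := (h.isSquare_mk_of_mem_normUnits hl hmem).mul
    (h.isSquare_mk_smul_of_mem_normUnits hl hmem τ)
  rw [← map_mul, hη, map_mul, map_pow] at hsq
  exact not_isSquare_mul_sq hu (mt Ideal.Quotient.eq_zero_iff_mem.1 hw) hsq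

theorem card_ker_sq_le_two_of_legendreSym_two [IsTotallyReal F] [IsTotallyReal K]
    [Fact q.Prime] (h : IsSqrtExtension F K (q : F) δ) (hM : IsMultiquadratic F {2, s, p} r)
    (hq4 : q % 4 = 3) (hs4 : s % 4 = 3) (hqs : ¬q ∣ s) (hqp : ¬q ∣ p) (hq2 : legendreSym q 2 = -1)
    (hF : Odd (Nat.card (ClassGroup (𝓞 F)))) {u η : (𝓞 F)ˣ} {w R : 𝓞 F} (hR : R ^ 2 = (2 : ℕ))
    (hu : (u : 𝓞 F) = 1 + R) {τ : Gal(F/ℚ)} (hτ : τ • R = R)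
    (hη : η * τ • (η : 𝓞 F) = u * w ^ 2) :
    Nat.card (powMonoidHom 2 : ClassGroup (𝓞 K) →* _).ker ≤ 2 := by
  have hq : q ≠ 2 := by omega
  have hq2' : ¬q ∣ 2 := by rwa [Nat.prime_dvd_prime_iff_eq Fact.out Nat.prime_two]
  obtain ⟨x, -, hx⟩ := hM.exists_sq_eq (a := s) (by simp)
  obtain ⟨hfin, hcard⟩ := hM.finite_primesAbove_and_ncard_mul_two_le (by simp) hq hq2
  have hpow : 2 ^ ({2, s, p} : Finset ℕ).card ≤ 2 ^ 3 :=
    Nat.pow_le_pow_right two_pos Finset.card_le_three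
  obtain ⟨v, hv⟩ := primesAbove_nonempty F q
  have hl := hM.not_isSquare_valuation_natCast hq (by simp [hq2', hqs, hqp]) hv
  have hu_sq : ¬IsSquare (Ideal.Quotient.mk v.asIdeal (u : 𝓞 F)) :=
    hu ▸ not_isSquare_mk_one_add_sqrt_two hM hq4 hq2 hv hR
  have huη : (u * η : (𝓞 F)ˣ) * τ • ((u * η : (𝓞 F)ˣ) : 𝓞 F) = u * (u * w) ^ 2 := by
    rw [Units.val_mul, smul_mul', hu, smul_add, smul_one, hτ, ← hu]
    linear_combination (u : 𝓞 F) ^ 2 * hη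
  exact h.card_ker_sq_le_two hF hfin
    (fun _ hv => h.hasTrivialInertia_of_sq_eq_mod_four_eq_three hq4 hx hs4 hv) (by omega)
    (fun hu => hu_sq (h.isSquare_mk_of_mem_normUnits hl hu))
    (h.notMem_normUnits_of_mul_smul_eq hl hu_sq hη) (h.notMem_normUnits_of_mul_smul_eq hl hu_sq huη)

end IsSqrtExtension

end NonNormUnits

theorem legendreSym_two_eq_neg_one {p : ℕ} [Fact p.Prime] (hp8 : p % 8 = 3 ∨ p % 8 = 5) :
    legendreSym p 2 = -1 := by
  rw [legendreSym.eq_neg_one_iff, Int.cast_ofNat, ZMod.exists_sq_eq_two_iff (by omega)]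
  omega

theorem legendreSym_eq_one_of_isSquare {p s : ℕ} [Fact p.Prime] [Fact s.Prime] (hp4 : p % 4 = 1)
    (hs2 : s ≠ 2) (hps : p ≠ s) (h : IsSquare (p : ZMod s)) : legendreSym p s = 1 := by
  have hs0 : ((s : ℤ) : ZMod p) ≠ 0 := by
    rwa [Int.cast_natCast, Ne, ZMod.natCast_eq_zero_iff,
      Nat.prime_dvd_prime_iff_eq Fact.out Fact.out]
  rw [legendreSym.eq_one_iff p hs0, Int.cast_natCast]
  exact (ZMod.exists_sq_eq_prime_iff_of_mod_four_eq_one hp4 hs2).2 h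

theorem exists_unit_eq_one_add_sqrt_two {R : Type*} [CommRing R] {x : R} (hx : x ^ 2 = (2 : ℕ)) :
    ∃ u : Rˣ, (u : R) = 1 + x := by
  rw [Nat.cast_ofNat] at hx
  exact ⟨Units.mkOfMulEqOne (1 + x) (x - 1) (by linear_combination hx), rfl⟩

section Tower

variable {F : Type*} [Field F] [NumberField F]

theorem IsMultiquadratic.exists_unit_mul_sq_eq_two_of_algebraMap {E : Type*} [Field E]
    [NumberField E] [Algebra E F] {s : ℕ} {r : ℕ → E} (hM : IsMultiquadratic E {s} r)
    (hs4 : s % 4 = 3) (hE : Odd (Nat.card (ClassGroup (𝓞 E)))) :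
    ∃ (u : (𝓞 F)ˣ) (y : 𝓞 F), u * y ^ 2 = 2 ∧
      ∀ g : Gal(F/ℚ), g (algebraMap E F (r s)) = algebraMap E F (r s) → g • y = y := by
  obtain ⟨u, y, huy⟩ := hM.exists_unit_mul_sq_eq_two hs4 hE
  refine ⟨Units.map (algebraMap (𝓞 E) (𝓞 F) : 𝓞 E →* 𝓞 F) u, algebraMap (𝓞 E) (𝓞 F) y, ?_,
    fun g hg => RingOfIntegers.ext ?_⟩
  · have := congrArg (algebraMap (𝓞 E) (𝓞 F)) huy
    rwa [map_mul, map_pow, map_ofNat (algebraMap (𝓞 E) (𝓞 F)) 2] at this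
  · let i : E →ₐ[ℚ] F := (algebraMap E F).toRatAlgHom
    have hgi : (g : F →ₐ[ℚ] F).comp i = i := hM.algHom_ext fun a ha =>
      Finset.mem_singleton.1 ha ▸ hg
    exact DFunLike.congr_fun hgi (y : E)

variable {A B : Type*} [Field A] [NumberField A] [Field B] [NumberField B] [Algebra A B]
  [Algebra B F] [Algebra A F] [IsScalarTower A B F]

theorem IsSqrtExtension.exists_unit_mul_smul_eq {d : A} {δ : B} (h : IsSqrtExtension A B d δ)
    (hB : Odd (Nat.card (ClassGroup (𝓞 B)))) {u : (𝓞 A)ˣ} (hu : u ∈ normUnits A B)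
    {τ : Gal(F/ℚ)} (hτA : ∀ x, τ (algebraMap A F x) = algebraMap A F x)
    (hτδ : τ (algebraMap B F δ) = -algebraMap B F δ) :
    ∃ (η : (𝓞 F)ˣ) (w : 𝓞 F), η * τ • (η : 𝓞 F) = algebraMap (𝓞 A) (𝓞 F) u * w ^ 2 := by
  obtain ⟨η, a, b, y, hη, -, hnorm⟩ := h.exists_unit_norm_form hB hu
  let ι : 𝓞 B →* 𝓞 F := algebraMap (𝓞 B) (𝓞 F)
  let κ : 𝓞 A →* 𝓞 F := algebraMap (𝓞 A) (𝓞 F)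
  have hι : algebraMap (𝓞 F) F (ι η) =
      algebraMap A F a + algebraMap A F b * algebraMap B F δ := by
    change algebraMap B F (η : 𝓞 B) = _
    rw [hη, map_add, map_mul, ← IsScalarTower.algebraMap_apply, ← IsScalarTower.algebraMap_apply]
  have hτι : algebraMap (𝓞 F) F (τ • ι η) =
      algebraMap A F a - algebraMap A F b * algebraMap B F δ := by
    change τ (algebraMap (𝓞 F) F (ι η)) = _
    rw [hι, map_add, map_mul, hτA, hτA, hτδ]
    ring
  have hδ : algebraMap B F δ ^ 2 = algebraMap A F d := by
    rw [← map_pow, h.sq, ← IsScalarTower.algebraMap_apply]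
  have hmul : algebraMap (𝓞 F) F (Units.map κ u) * algebraMap A F y ^ 2 =
      algebraMap (𝓞 F) F (ι η * τ • ι η) := by
    change algebraMap A F (u : 𝓞 A) * _ = _
    rw [← map_pow, ← map_mul, hnorm, map_mul (algebraMap (𝓞 F) F), hι, hτι, map_sub, map_mul,
      map_pow, map_pow, ← hδ]
    ring
  obtain ⟨w, -, hw⟩ := exists_ringOfIntegers_unit_mul_sq_eq hmul
  exact ⟨Units.map ι η, w, hw.symm⟩

theorem IsSqrtExtension.exists_gal_unit_mul_smul_eq {C : Type*} [Field C] [NumberField C]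
    [Algebra A C] [Algebra C F] [IsScalarTower A C F] {d : A} {e : C} {δ : B}
    (hAB : IsSqrtExtension A B d δ) (hCF : IsSqrtExtension C F e (algebraMap B F δ))
    (hB : Odd (Nat.card (ClassGroup (𝓞 B)))) {u : (𝓞 A)ˣ} (hu : u ∈ normUnits A B) :
    ∃ (τ : Gal(F/ℚ)) (η : (𝓞 F)ˣ) (w : 𝓞 F),
      (∀ x : 𝓞 A, τ • algebraMap (𝓞 A) (𝓞 F) x = algebraMap (𝓞 A) (𝓞 F) x) ∧
        η * τ • (η : 𝓞 F) = algebraMap (𝓞 A) (𝓞 F) u * w ^ 2 := by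
  obtain ⟨σ, hσ⟩ := hCF.exists_apply_eq_neg
  have hσA (x : A) : σ.restrictScalars ℚ (algebraMap A F x) = algebraMap A F x := by
    rw [IsScalarTower.algebraMap_apply A C F]
    exact σ.commutes _
  exact ⟨σ.restrictScalars ℚ, (hAB.exists_unit_mul_smul_eq hB hu hσA hσ).imp
    fun _ => .imp fun _ hη => ⟨fun x => RingOfIntegers.ext (hσA x), hη⟩⟩

end Tower

/-! ### Multiquadratic subfields of the complex numbers -/

section AdjoinSimple

open IntermediateField Polynomial

variable {F L : Type*} [Field F] [Field L] [Algebra F L] {d e : F} {α x : L}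

theorem exists_eq_add_mul_of_mem_adjoin (hα : α ^ 2 = algebraMap F L d) (hx : x ∈ F⟮α⟯) :
    ∃ a b : F, x = algebraMap F L a + algebraMap F L b * α := by
  have hroot : aeval α (X ^ 2 - C d) = 0 := by simp [hα]
  have hmonic : (X ^ 2 - C d).Monic := monic_X_pow_sub_C d two_ne_zero
  have halg : IsAlgebraic F α := ⟨_, hmonic.ne_zero, hroot⟩
  rw [← mem_toSubalgebra, adjoin_simple_toSubalgebra_of_isAlgebraic halg,
    Algebra.adjoin_singleton_eq_range_aeval] at hx
  obtain ⟨f, rfl⟩ := hx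
  have hdeg : (f %ₘ (X ^ 2 - C d)).natDegree ≤ 1 := by
    have := natDegree_modByMonic_lt f hmonic fun h => by simpa using congrArg natDegree h
    rw [natDegree_X_pow_sub_C] at this
    omega
  obtain ⟨b, a, hab⟩ := exists_eq_X_add_C_of_natDegree_le_one hdeg
  refine ⟨a, b, ?_⟩
  change aeval α f = _
  rw [← aeval_modByMonic_eq_self_of_root hroot, hab]
  simp [add_comm]

theorem mem_range_algebraMap_of_mem_adjoin_of_sq_eq [CharZero L] (hα : α ^ 2 = algebraMap F L d)
    (hx : x ^ 2 = algebraMap F L e) (hmem : x ∈ F⟮α⟯) :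
    x ∈ (algebraMap F L).range ∨ x * α ∈ (algebraMap F L).range ∨ α ∈ (algebraMap F L).range := by
  obtain ⟨a, b, rfl⟩ := exists_eq_add_mul_of_mem_adjoin hα hmem
  rcases eq_or_ne b 0 with rfl | hb
  · exact .inl ⟨a, by simp⟩
  rcases eq_or_ne a 0 with rfl | ha
  · exact .inr (.inl ⟨b * d, by rw [map_mul, ← hα, map_zero]; ring⟩)
  have ha' : algebraMap F L a ≠ 0 := by simpa using ha
  have hb' : algebraMap F L b ≠ 0 := by simpa using hb
  refine .inr (.inr ⟨(e - a ^ 2 - b ^ 2 * d) / (2 * a * b), ?_⟩)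
  simp only [map_div₀, map_sub, map_mul, map_pow, map_ofNat, ← hα, ← hx]
  field_simp
  ring

end AdjoinSimple

/-- The nonnegative square root of `n`, as a complex number. -/
noncomputable def sqrtNat (n : ℕ) : ℂ := (Real.sqrt n : ℝ)

theorem sqrtNat_sq (n : ℕ) : sqrtNat n ^ 2 = n := by
  rw [sqrtNat, ← Complex.ofReal_pow, Real.sq_sqrt n.cast_nonneg, Complex.ofReal_natCast]

theorem sqrtNat_mul (m n : ℕ) : sqrtNat (m * n) = sqrtNat m * sqrtNat n := by
  rw [sqrtNat, sqrtNat, sqrtNat, ← Complex.ofReal_mul, Nat.cast_mul, Real.sqrt_mul m.cast_nonneg]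

/-- The subfield of `ℂ` generated by the square roots of the elements of `S`. -/
noncomputable def multiquadraticField (S : Finset ℕ) : IntermediateField ℚ ℂ :=
  IntermediateField.adjoin ℚ (sqrtNat '' S)

namespace multiquadraticField

variable {S T : Finset ℕ} {a : ℕ}

theorem sqrtNat_mem (ha : a ∈ S) : sqrtNat a ∈ multiquadraticField S :=
  IntermediateField.subset_adjoin _ _ ⟨a, ha, rfl⟩

theorem mono (h : S ⊆ T) : multiquadraticField S ≤ multiquadraticField T :=
  IntermediateField.adjoin.mono _ _ _ (Set.image_mono h)

theorem mem_adjoin_of_mem_insert {x : ℂ} (hx : x ∈ multiquadraticField (insert a S)) :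
    x ∈ IntermediateField.adjoin (multiquadraticField S) {sqrtNat a} := by
  rw [multiquadraticField, Finset.coe_insert, Set.image_insert_eq, ← Set.union_singleton,
    ← IntermediateField.adjoin_adjoin_left] at hx
  exact hx

instance numberField (S : Finset ℕ) : NumberField (multiquadraticField S) where
  to_finiteDimensional := by
    have : Finite (sqrtNat '' S) := (S.finite_toSet.image sqrtNat).to_subtype
    refine IntermediateField.finiteDimensional_adjoin ?_
    rintro _ ⟨n, -, rfl⟩
    refine .of_pow two_pos ?_
    rw [sqrtNat_sq, ← map_natCast (algebraMap ℚ ℂ)]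
    exact isIntegral_algebraMap

/-- The square root of `a` as an element of `multiquadraticField S`; it is `0` for `a ∉ S`. -/
noncomputable def sqrt (S : Finset ℕ) (a : ℕ) : multiquadraticField S :=
  if h : a ∈ S then ⟨sqrtNat a, sqrtNat_mem h⟩ else 0

theorem coe_sqrt (ha : a ∈ S) : (sqrt S a : ℂ) = sqrtNat a := by
  rw [sqrt, dif_pos ha]

theorem sqrt_sq (ha : a ∈ S) : sqrt S a ^ 2 = a :=
  Subtype.ext (by simp [coe_sqrt ha, sqrtNat_sq])

theorem isMultiquadratic (S : Finset ℕ) :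
    IsMultiquadratic (multiquadraticField S) S (sqrt S) where
  sq _ := sqrt_sq
  adjoin_eq_top := by
    rw [Subsingleton.elim DivisionRing.toRatAlgebra (multiquadraticField S).algebra']
    refine IntermediateField.lift_injective _ ?_
    rw [IntermediateField.lift_adjoin, IntermediateField.lift_top, ← Set.image_comp]
    exact congrArg (IntermediateField.adjoin ℚ) (Set.image_congr fun a ha => coe_sqrt ha)

theorem sqrtNat_notMem {d : ℕ} (hS : ∀ b ∈ S, b.Prime) (hd : Squarefree d) (hd1 : 1 < d)
    (hSd : ∀ b ∈ S, ¬b ∣ d) : sqrtNat d ∉ multiquadraticField S := by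
  induction S using Finset.induction_on generalizing d with
  | empty =>
    intro hmem
    rw [multiquadraticField, Finset.coe_empty, Set.image_empty, IntermediateField.adjoin_empty,
      IntermediateField.mem_bot] at hmem
    obtain ⟨x, hx⟩ := hmem
    have hsq : ¬IsSquare d := by
      rintro ⟨e, rfl⟩
      simp [Nat.isUnit_iff.1 (hd e dvd_rfl)] at hd1
    refine irrational_sqrt_natCast_iff.2 hsq ⟨x, Complex.ofReal_injective ?_⟩
    rw [← sqrtNat, ← hx, Complex.ofReal_ratCast, eq_ratCast]
  | insert a S haS ih =>
    rw [Finset.forall_mem_insert] at hS hSd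
    intro hmem
    have hSa (b) (hb : b ∈ S) : ¬b ∣ a := fun hba =>
      haS ((Nat.prime_dvd_prime_iff_eq (hS.2 b hb) hS.1).1 hba ▸ hb)
    rcases mem_range_algebraMap_of_mem_adjoin_of_sq_eq (d := (a : multiquadraticField S))
      (e := (d : multiquadraticField S)) (by simp [sqrtNat_sq]) (by simp [sqrtNat_sq])
      (mem_adjoin_of_mem_insert hmem) with ⟨x, hx⟩ | ⟨x, hx⟩ | ⟨x, hx⟩
    · exact ih hS.2 hd hd1 hSd.2 (hx ▸ x.2)
    · rw [← sqrtNat_mul] at hx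
      refine ih hS.2 ?_ (Nat.one_lt_mul_iff.2 ⟨by omega, hS.1.pos, .inl hd1⟩) (fun b hb hbd => ?_)
        (hx ▸ x.2)
      · exact (Nat.squarefree_mul ((hS.1.coprime_iff_not_dvd.2 hSd.1).symm)).2
          ⟨hd, hS.1.squarefree⟩
      · exact ((hS.2 b hb).dvd_mul.1 hbd).elim (hSd.2 b hb) (hSa b hb)
    · exact ih hS.2 hS.1.squarefree hS.1.one_lt hSa (hx ▸ x.2)

/-- The inclusion of multiquadratic fields as an algebra structure. It is not an instance, since
`S ⊆ T` cannot be inferred and the case `S = T` would conflict with `Algebra.id`. -/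
noncomputable abbrev algebraOfSubset (h : S ⊆ T) :
    Algebra (multiquadraticField S) (multiquadraticField T) :=
  (IntermediateField.inclusion (mono h)).toRingHom.toAlgebra

theorem coe_algebraMap (h : S ⊆ T) (x : multiquadraticField S) :
    let _ := algebraOfSubset h
    (algebraMap (multiquadraticField S) (multiquadraticField T) x : ℂ) = x :=
  IntermediateField.coe_inclusion (mono h) x

theorem isScalarTower {U : Finset ℕ} (hST : S ⊆ T) (hTU : T ⊆ U) :
    let _ := algebraOfSubset hST
    let _ := algebraOfSubset hTU
    let _ := algebraOfSubset (hST.trans hTU)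
    IsScalarTower (multiquadraticField S) (multiquadraticField T) (multiquadraticField U) :=
  let _ := algebraOfSubset hST
  let _ := algebraOfSubset hTU
  let _ := algebraOfSubset (hST.trans hTU)
  .of_algebraMap_eq fun x => Subtype.ext <| by
    rw [coe_algebraMap (hST.trans hTU), coe_algebraMap hTU, coe_algebraMap hST]

theorem algebraMap_sqrt (h : S ⊆ T) (ha : a ∈ S) :
    let _ := algebraOfSubset h
    algebraMap (multiquadraticField S) (multiquadraticField T) (sqrt S a) = sqrt T a :=
  Subtype.ext <| (coe_algebraMap h _).trans <| (coe_sqrt ha).trans (coe_sqrt (h ha)).symm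

theorem isSqrtExtension (hT : insert a S = T) (hprime : ∀ b ∈ T, b.Prime) (ha : a ∉ S) :
    let _ := algebraOfSubset (hT ▸ Finset.subset_insert a S)
    IsSqrtExtension (multiquadraticField S) (multiquadraticField T)
      (a : multiquadraticField S) (sqrt T a) := by
  subst hT
  rw [Finset.forall_mem_insert] at hprime
  let _ := algebraOfSubset (Finset.subset_insert a S)
  refine ⟨by simpa using sqrt_sq (Finset.mem_insert_self a S), fun ⟨y, hy⟩ => ?_, fun x => ?_⟩
  · have hSa (b) (hb : b ∈ S) : ¬b ∣ a := fun hba =>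
      ha ((Nat.prime_dvd_prime_iff_eq (hprime.2 b hb) hprime.1).1 hba ▸ hb)
    refine sqrtNat_notMem hprime.2 hprime.1.squarefree hprime.1.one_lt hSa ?_
    have hy' : sqrtNat a ^ 2 = (y : ℂ) ^ 2 := by
      rw [sqrtNat_sq, pow_two]
      exact congrArg Subtype.val hy
    rcases sq_eq_sq_iff_eq_or_eq_neg.1 hy' with h | h
    · exact h ▸ y.2
    · exact h ▸ neg_mem y.2
  · obtain ⟨u, v, huv⟩ := exists_eq_add_mul_of_mem_adjoin (d := (a : multiquadraticField S))
      (by simp [sqrtNat_sq]) (mem_adjoin_of_mem_insert x.2)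
    refine ⟨u, v, Subtype.ext (huv.trans ?_)⟩
    rw [← coe_sqrt (Finset.mem_insert_self a S)]
    rfl

instance isTotallyReal (S : Finset ℕ) : IsTotallyReal (multiquadraticField S) :=
  (isMultiquadratic S).isTotallyReal

theorem odd_card_classGroup_two : Odd (Nat.card (ClassGroup (𝓞 (multiquadraticField {2})))) := by
  let _ := algebraOfSubset (Finset.empty_subset {2})
  have h : IsSqrtExtension (multiquadraticField ∅) (multiquadraticField {2}) (2 : ℕ) (sqrt {2} 2) :=
    isSqrtExtension rfl (by simp [Nat.prime_two]) (by simp)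
  obtain ⟨hfin, hcard⟩ := (isMultiquadratic ∅).finite_primesAbove_and_ncard_le 2
  exact h.odd_card_classGroup_of_sqrt_two (isMultiquadratic ∅).odd_card_classGroup_of_empty hfin
    (by simpa using hcard)

variable {p q s : ℕ} [Fact p.Prime] [Fact q.Prime] [Fact s.Prime]

theorem odd_card_classGroup_singleton (hs4 : s % 4 = 3) :
    Odd (Nat.card (ClassGroup (𝓞 (multiquadraticField {s})))) := by
  let _ := algebraOfSubset (Finset.empty_subset {s})
  have h : IsSqrtExtension (multiquadraticField ∅) (multiquadraticField {s}) (s : ℕ) (sqrt {s} s) :=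
    isSqrtExtension rfl (by simp [(Fact.out : s.Prime)]) (by simp)
  exact h.odd_card_classGroup_of_mod_four_eq_three (isMultiquadratic ∅) hs4
    (isMultiquadratic ∅).odd_card_classGroup_of_empty

theorem odd_card_classGroup_two_pair (hs4 : s % 4 = 3) :
    Odd (Nat.card (ClassGroup (𝓞 (multiquadraticField {2, s})))) := by
  let _ := algebraOfSubset (Finset.subset_insert 2 {s})
  have h : IsSqrtExtension (multiquadraticField {s}) (multiquadraticField {2, s}) (2 : ℕ)
      (sqrt {2, s} 2) :=
    isSqrtExtension rfl (by simp [Nat.prime_two, (Fact.out : s.Prime)])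
      (by rw [Finset.mem_singleton]; omega)
  exact h.odd_card_classGroup_of_sqrt_two (odd_card_classGroup_singleton hs4)
    ((isMultiquadratic {s}).finite_primesAbove_and_ncard_le 2).1
    ((isMultiquadratic {s}).ncard_primesAbove_two_le_one hs4)

theorem odd_card_classGroup_triple (hp8 : p % 8 = 5) (hs4 : s % 4 = 3)
    (hps : IsSquare (p : ZMod s)) :
    Odd (Nat.card (ClassGroup (𝓞 (multiquadraticField {2, s, p})))) := by
  have hT : insert p {2, s} = ({2, s, p} : Finset ℕ) := by grind
  let _ := algebraOfSubset (Finset.subset_insert 2 {s})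
  let _ := algebraOfSubset (hT ▸ Finset.subset_insert p {2, s})
  have h : IsSqrtExtension (multiquadraticField {2, s}) (multiquadraticField {2, s, p}) (p : ℕ)
      (sqrt {2, s, p} p) :=
    isSqrtExtension hT (by simp [Nat.prime_two, (Fact.out : s.Prime), (Fact.out : p.Prime)])
      (by grind)
  obtain ⟨U, Y, hUY, hY⟩ := (isMultiquadratic {s}).exists_unit_mul_sq_eq_two_of_algebraMap
    (F := multiquadraticField {2, s}) hs4 (odd_card_classGroup_singleton hs4)
  rw [algebraMap_sqrt _ (Finset.mem_singleton_self s)] at hY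
  exact h.odd_card_classGroup_of_legendreSym (isMultiquadratic {2, s}) (by omega)
    (legendreSym_two_eq_neg_one (.inr hp8))
    (legendreSym_eq_one_of_isSquare (by omega) (by omega) (by omega) hps)
    (odd_card_classGroup_two_pair hs4) hUY hY

theorem exists_unit_mul_smul_eq (hp8 : p % 8 = 5) (hs4 : s % 4 = 3) :
    ∃ (u η : (𝓞 (multiquadraticField {2, s, p}))ˣ) (R w : 𝓞 (multiquadraticField {2, s, p}))
      (τ : Gal(multiquadraticField {2, s, p}/ℚ)), R ^ 2 = (2 : ℕ) ∧
        (u : 𝓞 (multiquadraticField {2, s, p})) = 1 + R ∧ τ • R = R ∧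
        η * τ • (η : 𝓞 (multiquadraticField {2, s, p})) = u * w ^ 2 := by
  set A := multiquadraticField {2}
  set B := multiquadraticField {2, p}
  set C := multiquadraticField {2, s}
  set F := multiquadraticField {2, s, p}
  have hB : insert p {2} = ({2, p} : Finset ℕ) := by grind
  have hF : insert p {2, s} = ({2, s, p} : Finset ℕ) := by grind
  let _ : Algebra A B := algebraOfSubset (hB ▸ Finset.subset_insert p {2})
  let _ : Algebra C F := algebraOfSubset (hF ▸ Finset.subset_insert p {2, s})
  let _ : Algebra A C := algebraOfSubset (by grind)
  let _ : Algebra B F := algebraOfSubset (by grind)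
  let _ : Algebra A F := algebraOfSubset (by grind)
  have : IsScalarTower A B F := isScalarTower (by grind) (by grind)
  have : IsScalarTower A C F := isScalarTower (by grind) (by grind)
  have hAB : IsSqrtExtension A B (p : ℕ) (sqrt {2, p} p) :=
    isSqrtExtension hB (by simp [Nat.prime_two, (Fact.out : p.Prime)]) (by grind)
  have hCF : IsSqrtExtension C F (p : ℕ) (algebraMap B F (sqrt {2, p} p)) := by
    rw [algebraMap_sqrt _ (by simp)]
    exact isSqrtExtension hF
      (by simp [Nat.prime_two, (Fact.out : s.Prime), (Fact.out : p.Prime)]) (by grind)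
  obtain ⟨hBodd, htop⟩ := hAB.odd_card_and_normUnits_eq_top_of_legendreSym_two
    (isMultiquadratic {2}) (by omega) (legendreSym_two_eq_neg_one (.inr hp8))
    odd_card_classGroup_two
  obtain ⟨R, -, hR⟩ := (isMultiquadratic {2}).exists_sq_eq (Finset.mem_singleton_self 2)
  obtain ⟨u, hu⟩ := exists_unit_eq_one_add_sqrt_two hR
  obtain ⟨τ, η, w, hτ, hη⟩ :=
    hAB.exists_gal_unit_mul_smul_eq hCF hBodd (htop ▸ Subgroup.mem_top u)
  refine ⟨Units.map (algebraMap (𝓞 A) (𝓞 F) : 𝓞 A →* 𝓞 F) u, η, algebraMap (𝓞 A) (𝓞 F) R, w,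
    τ, ?_, ?_, hτ R, hη⟩
  · rw [← map_pow, hR, map_natCast (algebraMap (𝓞 A) (𝓞 F))]
  · change algebraMap (𝓞 A) (𝓞 F) u = _
    rw [hu, map_add, map_one]

theorem card_ker_sq_le_two (hqs : q ≠ s) (hp8 : p % 8 = 5) (hq8 : q % 8 = 3) (hs4 : s % 4 = 3)
    (hps : IsSquare (p : ZMod s)) :
    Nat.card (powMonoidHom 2 :
      ClassGroup (𝓞 (multiquadraticField {2, s, p, q})) →* _).ker ≤ 2 := by
  have hT : insert q {2, s, p} = ({2, s, p, q} : Finset ℕ) := by grind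
  let _ := algebraOfSubset (hT ▸ Finset.subset_insert q {2, s, p})
  have h : IsSqrtExtension (multiquadraticField {2, s, p}) (multiquadraticField {2, s, p, q})
      (q : ℕ) (sqrt {2, s, p, q} q) :=
    isSqrtExtension hT (by simp [Nat.prime_two, (Fact.out : s.Prime), (Fact.out : p.Prime),
      (Fact.out : q.Prime)]) (by grind)
  have hqs' : ¬q ∣ s := by rwa [Nat.prime_dvd_prime_iff_eq Fact.out Fact.out]
  have hqp : ¬q ∣ p := by
    rw [Nat.prime_dvd_prime_iff_eq Fact.out Fact.out]
    omega
  obtain ⟨u, η, R, w, τ, hR, hu, hτ, hη⟩ := exists_unit_mul_smul_eq hp8 hs4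
  exact h.card_ker_sq_le_two_of_legendreSym_two (isMultiquadratic {2, s, p}) (by omega) hs4 hqs' hqp
    (legendreSym_two_eq_neg_one (.inl hq8)) (odd_card_classGroup_triple hp8 hs4 hps) hR hu hτ hη

end multiquadraticField

theorem quadquad_eq_multiquadraticField (p q s : ℕ) :
    quadquad p q s = multiquadraticField {2, s, p, q} := by
  rw [quadquad, multiquadraticField]
  congr 1
  ext x
  simp only [Set.mem_insert_iff, Set.mem_singleton_iff, Finset.coe_insert, Finset.coe_singleton,
    Set.image_insert_eq, Set.image_singleton, sqrtNat, Nat.cast_ofNat]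
  tauto

end TwoClassGroup

theorem two_class_group_cyclic_general (p q s : ℕ) (hp : p.Prime) (hq : q.Prime) (hs : s.Prime)
    (hqs : q ≠ s) (hp8 : p % 8 = 5) (hq8 : q % 8 = 3) (hs4 : s % 4 = 3)
    (hQRs : IsSquare (p : ZMod s)) :
    ∀ P : Sylow 2 (ClassGroup (𝓞 (quadquad p q s))),
      IsCyclic (P : Subgroup (ClassGroup (𝓞 (quadquad p q s)))) := by
  have := Fact.mk hp
  have := Fact.mk hq
  have := Fact.mk hs
  rw [TwoClassGroup.quadquad_eq_multiquadraticField]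
  exact TwoClassGroup.sylow_isCyclic_of_card_ker_powMonoidHom_le
    (TwoClassGroup.multiquadraticField.card_ker_sq_le_two hqs hp8 hq8 hs4 hQRs)

theorem two_class_group_cyclic
    (p q s : ℕ) (hp : p.Prime) (hq : q.Prime) (hs : s.Prime)
    (hpq : p ≠ q) (hps : p ≠ s) (hqs : q ≠ s)
    (hp8 : p % 8 = 5) (hq8 : q % 8 = 3) (hs4 : s % 4 = 3)
    (hQRq : IsSquare (p : ZMod q)) (hQRs : IsSquare (p : ZMod s)) :
    ∀ P : Sylow 2 (ClassGroup (𝓞 (quadquad p q s))),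
      IsCyclic (P : Subgroup (ClassGroup (𝓞 (quadquad p q s)))) :=
  two_class_group_cyclic_general p q s hp hq hs hqs hp8 hq8 hs4 hQRs
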